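/- arXiv:1607.00921 — 3 statements merged into one kernel-verified Lean document; each statement's English description precedes it below -/
import Mathlib

section
/- Let R be a ring which is a finitely generated module over a central subring C, and let p be a prime ideal of C. Then there exists a prime ideal Q of R with Q ∩ C = p and height(Q) ≥ height(p). -/
/-- A two-sided ideal of a (possibly noncommutative) ring is prime. -/
def IsPrimeTS {R : Type*} [Ring R] (P : TwoSidedIdeal R) : Prop :=
  P ≠ ⊤ ∧ ∀ a b : R, (∀ r : R, a * r * b ∈ P) → a ∈ P ∨ b ∈ P

/-- Height of an element `P` in a poset with respect to a predicate (`prime`):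
the supremum of lengths of strictly increasing chains of elements satisfying the
predicate and ending at `P`. -/
noncomputable def primeChainHeight {α : Type*} [Preorder α] (isP : α → Prop) (P : α) : ℕ∞ :=
  sSup {n : ℕ∞ | ∃ m : ℕ, n = (m : ℕ∞) ∧ ∃ f : Fin (m + 1) → α,
    StrictMono f ∧ (∀ i, isP (f i)) ∧ f (Fin.last m) = P}

/-- Height (codimension) of a two-sided ideal: the supremum of lengths of chains of
prime two-sided ideals descending from it. -/
noncomputable def tsHeight {R : Type*} [Ring R] (P : TwoSidedIdeal R) : ℕ∞ :=
  primeChainHeight IsPrimeTS P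

/-- Height of an ideal of a commutative ring. -/
noncomputable def cHeight {C : Type*} [CommRing C] (p : Ideal C) : ℕ∞ :=
  primeChainHeight Ideal.IsPrime p

/-- Contraction `P ∩ C` of a two-sided ideal of `R` to the central subring `C`
(given via the algebra structure map, whose image is central). -/
def contractTS {C R : Type*} [CommRing C] [Ring R] [Algebra C R]
    (P : TwoSidedIdeal R) : Ideal C :=
  Ideal.comap (algebraMap C R) (TwoSidedIdeal.asIdeal P)

/-!
A prime `Q` of `R` over `p` above a given ideal `I` with `I ∩ C ⊆ p` is found by Krull's method:
`I + pR` still meets `C` inside `p`, because the support of the finite `C`-module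
`(R / I) / p (R / I)` contains `p`, and an ideal maximal among those avoiding the image of `C \ p`
is prime. Hence chains of primes of `C` ending at `p` lift to chains of primes of `R` of the same
length, but the top of the lifted chain may depend on the chain. Only finitely many primes of `R`
lie over `p`, since elements separating them are linearly independent over `C / p` in `R / pR`; so
one of largest height among them works for all chains at once.
-/

section Order

variable {α β : Type*} [Preorder α]

theorem natCast_le_primeChainHeight {isP : α → Prop} {m : ℕ} {f : Fin (m + 1) → α}
    (hf : StrictMono f) (hP : ∀ i, isP (f i)) : (m : ℕ∞) ≤ primeChainHeight isP (f (Fin.last m)) :=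
  le_sSup ⟨m, rfl, f, hf, hP, rfl⟩

theorem exists_strictMono_lift_of_goingUp [PartialOrder β] {π : β → α} {isP : α → Prop}
    {isQ : β → Prop}
    (goingUp : ∀ a b, isP a → π b ≤ a → ∃ b', b ≤ b' ∧ isQ b' ∧ π b' = a)
    {m : ℕ} {f : Fin (m + 1) → α} (hf : StrictMono f) (hP : ∀ i, isP (f i))
    {b : β} (hb : π b ≤ f 0) :
    ∃ g : Fin (m + 1) → β, b ≤ g 0 ∧ StrictMono g ∧ ∀ i, isQ (g i) ∧ π (g i) = f i := by
  obtain ⟨b₀, hbb₀, hb₀, hπb₀⟩ := goingUp (f 0) b (hP 0) hb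
  induction m generalizing b b₀ with
  | zero =>
    exact ⟨![b₀], hbb₀, strictMono_vecEmpty, Fin.forall_fin_one.2 ⟨hb₀, hπb₀⟩⟩
  | succ m ih =>
    have hlt : π b₀ < f 1 := hπb₀.trans_lt (hf Fin.zero_lt_one)
    obtain ⟨b₁, hb₀₁, hb₁, hπb₁⟩ := goingUp (f 1) b₀ (hP 1) hlt.le
    obtain ⟨g, hg₀, hg, hgf⟩ := ih (f := Fin.tail f) (hf.comp Fin.strictMono_succ)
      (fun i => hP i.succ) hlt.le b₁ hb₀₁ hb₁ hπb₁
    have hb₀g : b₀ < g 0 := by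
      refine hg₀.lt_of_ne fun h => hlt.ne ?_
      rw [h, (hgf 0).2]
      rfl
    exact ⟨Matrix.vecCons b₀ g, hbb₀, strictMono_vecCons.2 ⟨hb₀g, hg⟩,
      Fin.forall_fin_succ.2 ⟨⟨hb₀, hπb₀⟩, hgf⟩⟩

end Order

section Ring

variable {R : Type*} [Ring R]

theorem mem_sSup_iff_of_directedOn_twoSidedIdeal {c : Set (TwoSidedIdeal R)} (hne : c.Nonempty)
    (hc : DirectedOn (· ≤ ·) c) {x : R} : x ∈ sSup c ↔ ∃ J ∈ c, x ∈ J := by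
  refine ⟨fun hx => ?_, fun ⟨J, hJ, hx⟩ => le_sSup hJ hx⟩
  let U : TwoSidedIdeal R := .mk' {x | ∃ J ∈ c, x ∈ J}
    (hne.imp fun J hJ => ⟨hJ, J.zero_mem⟩)
    (by
      rintro a b ⟨J, hJ, ha⟩ ⟨K, hK, hb⟩
      obtain ⟨L, hL, hJL, hKL⟩ := hc J hJ K hK
      exact ⟨L, hL, L.add_mem (hJL ha) (hKL hb)⟩)
    (fun ⟨J, hJ, ha⟩ => ⟨J, hJ, J.neg_mem ha⟩)
    (fun ⟨J, hJ, ha⟩ => ⟨J, hJ, J.mul_mem_left _ _ ha⟩)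
    (fun ⟨J, hJ, ha⟩ => ⟨J, hJ, J.mul_mem_right _ _ ha⟩)
  have mem_U (y : R) : y ∈ U ↔ ∃ J ∈ c, y ∈ J := TwoSidedIdeal.mem_mk' ..
  have hU : sSup c ≤ U := sSup_le fun J hJ y hy => (mem_U y).2 ⟨J, hJ, hy⟩
  exact (mem_U x).1 (hU hx)

theorem exists_le_maximal_disjoint_twoSidedIdeal {I : TwoSidedIdeal R} {S : Set R}
    (hI : Disjoint (I : Set R) S) :
    ∃ Q, I ≤ Q ∧ Maximal (fun J : TwoSidedIdeal R => Disjoint (J : Set R) S) Q := by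
  refine zorn_le_nonempty₀ {J : TwoSidedIdeal R | Disjoint (J : Set R) S} ?_ I hI
  intro c hcS hc J hJ
  refine ⟨sSup c, Set.disjoint_left.2 fun x hx => ?_, fun _ => le_sSup⟩
  obtain ⟨K, hK, hxK⟩ := (mem_sSup_iff_of_directedOn_twoSidedIdeal ⟨J, hJ⟩ hc.directedOn).1 hx
  exact Set.disjoint_left.1 (hcS hK) hxK

theorem mul_mul_mem_of_mem_span_twoSidedIdeal {Q : TwoSidedIdeal R} {s t : Set R}
    (hst : ∀ x ∈ s, ∀ y ∈ t, ∀ r, x * r * y ∈ Q) {x y : R} (hx : x ∈ TwoSidedIdeal.span s)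
    (hy : y ∈ TwoSidedIdeal.span t) (r : R) : x * r * y ∈ Q := by
  induction hx using TwoSidedIdeal.span_induction generalizing r with
  | zero => simp [Q.zero_mem]
  | add x x' _ _ hx hx' => simpa only [add_mul] using Q.add_mem (hx r) (hx' r)
  | neg x _ hx => simpa only [neg_mul] using Q.neg_mem (hx r)
  | left_absorb a x _ hx => simpa only [mul_assoc] using Q.mul_mem_left a _ (hx r)
  | right_absorb a x _ hx => simpa only [mul_assoc] using hx (a * r)
  | mem x hxs =>
    induction hy using TwoSidedIdeal.span_induction generalizing r with
    | zero => simp [Q.zero_mem]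
    | add y y' _ _ hy hy' => simpa only [mul_add] using Q.add_mem (hy r) (hy' r)
    | neg y _ hy => simpa only [mul_neg] using Q.neg_mem (hy r)
    | left_absorb a y _ hy => simpa only [mul_assoc] using hy (r * a)
    | right_absorb a y _ hy => simpa only [mul_assoc] using Q.mul_mem_right _ a (hy r)
    | mem y hyt => exact hst x hxs y hyt r

theorem isPrimeTS_of_maximal_disjoint {Q : TwoSidedIdeal R} {S : Set R} (hne : S.Nonempty)
    (hS : ∀ s ∈ S, ∀ t ∈ S, ∃ r, s * r * t ∈ S)
    (hQ : Maximal (fun J : TwoSidedIdeal R => Disjoint (J : Set R) S) Q) : IsPrimeTS Q := by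
  have exists_mem_span_insert {a : R} (ha : a ∉ Q) :
      ∃ s ∈ TwoSidedIdeal.span (insert a (Q : Set R)), s ∈ S := by
    by_contra! h
    have hle : Q ≤ TwoSidedIdeal.span (insert a (Q : Set R)) :=
      fun x hx => TwoSidedIdeal.subset_span (Set.mem_insert_of_mem a hx)
    exact ha (hQ.le_of_ge (Set.disjoint_left.2 h) hle
      (TwoSidedIdeal.subset_span (Set.mem_insert a _)))
  refine ⟨?_, fun a b hab => ?_⟩
  · rintro rfl
    obtain ⟨s, hs⟩ := hne
    exact Set.disjoint_left.1 hQ.prop (TwoSidedIdeal.mem_top R) hs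
  · by_contra! ⟨ha, hb⟩
    obtain ⟨s, hsa, hs⟩ := exists_mem_span_insert ha
    obtain ⟨t, htb, ht⟩ := exists_mem_span_insert hb
    obtain ⟨r, hr⟩ := hS s hs t ht
    refine Set.disjoint_left.1 hQ.prop (mul_mul_mem_of_mem_span_twoSidedIdeal ?_ hsa htb r) hr
    rintro x (rfl | hx) y (rfl | hy) r
    · exact hab r
    · exact Q.mul_mem_left _ _ hy
    all_goals exact Q.mul_mem_right _ _ (Q.mul_mem_right _ _ hx)

namespace IsPrimeTS

variable {P : TwoSidedIdeal R}

theorem infPrime (hP : IsPrimeTS P) : InfPrime P := by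
  refine ⟨fun hmax => hP.1 hmax.eq_top, fun I J hIJ => ?_⟩
  by_contra! ⟨hI, hJ⟩
  obtain ⟨a, haI, haP⟩ := Set.not_subset.1 hI
  obtain ⟨b, hbJ, hbP⟩ := Set.not_subset.1 hJ
  refine (hP.2 a b fun r => hIJ ((TwoSidedIdeal.mem_inf R).2 ⟨?_, ?_⟩)).elim haP hbP
  · exact I.mul_mem_right _ _ (I.mul_mem_right _ _ haI)
  · exact J.mul_mem_left _ _ hbJ

theorem exists_notMem_forall_mem (hP : IsPrimeTS P) (S : Finset (TwoSidedIdeal R)) :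
    ∃ x ∉ P, ∀ Q ∈ S, ¬Q ≤ P → x ∈ Q := by
  classical
  have hnle : ¬(S.filter (¬· ≤ P)).inf id ≤ P := by
    rw [hP.infPrime.finset_inf_le]
    rintro ⟨Q, hQS, hQP⟩
    exact (Finset.mem_filter.1 hQS).2 hQP
  obtain ⟨x, hx, hxP⟩ := Set.not_subset.1 hnle
  exact ⟨x, hxP, fun Q hQS hQP => Finset.inf_le (f := id) (Finset.mem_filter.2 ⟨hQS, hQP⟩) hx⟩

end IsPrimeTS

end Ring

section Algebra

variable {C R : Type*} [CommRing C] [Ring R] [Algebra C R]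

theorem mem_contractTS {P : TwoSidedIdeal R} {c : C} :
    c ∈ contractTS P ↔ algebraMap C R c ∈ P := by
  rw [contractTS, Ideal.mem_comap, TwoSidedIdeal.mem_asIdeal]

theorem contractTS_bot (hinj : Function.Injective (algebraMap C R)) :
    contractTS (⊥ : TwoSidedIdeal R) = (⊥ : Ideal C) := by
  ext c
  rw [mem_contractTS, TwoSidedIdeal.mem_bot, Ideal.mem_bot, map_eq_zero_iff _ hinj]

theorem smul_mem_of_mem_contractTS {P : TwoSidedIdeal R} {c : C} (hc : c ∈ contractTS P) (x : R) :
    c • x ∈ P := by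
  rw [Algebra.smul_def]
  exact P.mul_mem_right _ _ (mem_contractTS.1 hc)

theorem IsPrimeTS.mem_contractTS_or_mem_of_smul_mem {P : TwoSidedIdeal R} (hP : IsPrimeTS P)
    {c : C} {x : R} (h : c • x ∈ P) : c ∈ contractTS P ∨ x ∈ P := by
  rw [mem_contractTS]
  refine hP.2 _ _ fun r => ?_
  rw [Algebra.commutes, mul_assoc, ← Algebra.smul_def]
  exact P.mul_mem_left r _ h

theorem disjoint_algebraMap_image_compl_iff {p : Ideal C} {J : TwoSidedIdeal R} :
    Disjoint (J : Set R) (algebraMap C R '' (p : Set C)ᶜ) ↔ contractTS J ≤ p := by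
  simp only [Set.disjoint_right, Set.forall_mem_image, Set.mem_compl_iff, SetLike.mem_coe,
    ← mem_contractTS, not_imp_not]
  rfl

theorem exists_isPrimeTS_ge_of_contractTS_le {p : Ideal C} (hp : p.IsPrime) {I : TwoSidedIdeal R}
    (hI : contractTS I ≤ p) : ∃ Q : TwoSidedIdeal R, I ≤ Q ∧ IsPrimeTS Q ∧ contractTS Q ≤ p := by
  obtain ⟨Q, hIQ, hQ⟩ := exists_le_maximal_disjoint_twoSidedIdeal
    (disjoint_algebraMap_image_compl_iff.2 hI)
  refine ⟨Q, hIQ, isPrimeTS_of_maximal_disjoint ?_ ?_ hQ,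
    disjoint_algebraMap_image_compl_iff.1 hQ.prop⟩
  · exact Set.Nonempty.image _ ⟨1, hp.one_notMem⟩
  · rintro _ ⟨s, hs, rfl⟩ _ ⟨t, ht, rfl⟩
    exact ⟨1, s * t, hp.mul_notMem hs ht, by rw [mul_one, map_mul]⟩

theorem mul_mem_smul_top_left (p : Ideal C) (r : R) {x : R} (hx : x ∈ p • (⊤ : Submodule C R)) :
    r * x ∈ p • (⊤ : Submodule C R) :=
  Submodule.smul_top_le_comap_smul_top p (LinearMap.mulLeft C r) hx

theorem mul_mem_smul_top_right (p : Ideal C) (r : R) {x : R} (hx : x ∈ p • (⊤ : Submodule C R)) :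
    x * r ∈ p • (⊤ : Submodule C R) :=
  Submodule.smul_top_le_comap_smul_top p (LinearMap.mulRight C r) hx

theorem mem_smul_top_of_mem_span_algebraMap_image {p : Ideal C} {x : R}
    (hx : x ∈ TwoSidedIdeal.span (algebraMap C R '' p)) : x ∈ p • (⊤ : Submodule C R) := by
  induction hx using TwoSidedIdeal.span_induction with
  | mem x hx =>
    obtain ⟨c, hc, rfl⟩ := hx
    rw [Algebra.algebraMap_eq_smul_one]
    exact Submodule.smul_mem_smul hc Submodule.mem_top
  | zero => exact zero_mem _
  | add x y _ _ hx hy => exact add_mem hx hy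
  | neg x _ hx => exact neg_mem hx
  | left_absorb r x _ hx => exact mul_mem_smul_top_left p r hx
  | right_absorb r x _ hx => exact mul_mem_smul_top_right p r hx

theorem mem_of_algebraMap_mem_smul_top [Module.Finite C R] {p : Ideal C} (hp : p.IsPrime)
    (hker : RingHom.ker (algebraMap C R) ≤ p) {c : C}
    (hc : algebraMap C R c ∈ p • (⊤ : Submodule C R)) : c ∈ p := by
  have hsupp : ⟨p, hp⟩ ∈ Module.support C (R ⧸ p • (⊤ : Submodule C R)) := by
    rw [Module.support_quotient, Module.support_of_algebra]
    exact ⟨hker, (PrimeSpectrum.mem_zeroLocus _ _).2 subset_rfl⟩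
  refine Module.annihilator_le_of_mem_support hsupp (Module.mem_annihilator.2 fun x => ?_)
  obtain ⟨r, rfl⟩ := Submodule.Quotient.mk_surjective _ x
  rw [← Submodule.Quotient.mk_smul, Submodule.Quotient.mk_eq_zero, Algebra.smul_def c r]
  exact mul_mem_smul_top_right p r hc

theorem contractTS_sup_span_algebraMap_image_le [Module.Finite C R] {p : Ideal C} (hp : p.IsPrime)
    {I : TwoSidedIdeal R} (hI : contractTS I ≤ p) :
    contractTS (I ⊔ TwoSidedIdeal.span (algebraMap C R '' p)) ≤ p := by
  intro c hc
  obtain ⟨y, hy, z, hz, hyz⟩ := TwoSidedIdeal.mem_sup.1 (mem_contractTS.1 hc)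
  let π : R →ₐ[C] R ⧸ I.asIdeal := Ideal.Quotient.mkₐ C I.asIdeal
  have hπ (x : R) : π x = 0 ↔ x ∈ I := by
    rw [Ideal.Quotient.mkₐ_eq_mk, Ideal.Quotient.eq_zero_iff_mem, TwoSidedIdeal.mem_asIdeal]
  have hker : RingHom.ker (algebraMap C (R ⧸ I.asIdeal)) ≤ p := fun d hd =>
    hI (mem_contractTS.2 ((hπ _).1 ((π.commutes d).trans hd)))
  have hcz : algebraMap C (R ⧸ I.asIdeal) c = π z := by
    rw [← π.commutes, ← hyz, map_add, (hπ y).2 hy, zero_add]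
  refine mem_of_algebraMap_mem_smul_top hp hker ?_
  rw [hcz]
  exact Submodule.smul_top_le_comap_smul_top p π.toLinearMap
    (mem_smul_top_of_mem_span_algebraMap_image hz)

variable (R) in
/-- The set of prime two-sided ideals of `R` lying over the ideal `p` of `C`, the noncommutative
counterpart of `Ideal.primesOver`. -/
def primesOverTS (p : Ideal C) : Set (TwoSidedIdeal R) :=
  {Q | IsPrimeTS Q ∧ contractTS Q = p}

theorem exists_mem_primesOverTS_ge [Module.Finite C R] {p : Ideal C} (hp : p.IsPrime)
    {I : TwoSidedIdeal R} (hI : contractTS I ≤ p) : ∃ Q, I ≤ Q ∧ Q ∈ primesOverTS R p := by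
  obtain ⟨Q, hIQ, hQ, hQp⟩ :=
    exists_isPrimeTS_ge_of_contractTS_le hp (contractTS_sup_span_algebraMap_image_le hp hI)
  refine ⟨Q, le_sup_left.trans hIQ, hQ, hQp.antisymm fun c hc => mem_contractTS.2 ?_⟩
  exact (le_sup_right.trans hIQ) (TwoSidedIdeal.subset_span ⟨c, hc, rfl⟩)

theorem mem_of_mem_smul_top_of_mem_primesOverTS {p : Ideal C} {Q : TwoSidedIdeal R}
    (hQ : Q ∈ primesOverTS R p) {x : R} (hx : x ∈ p • (⊤ : Submodule C R)) : x ∈ Q :=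
  Submodule.smul_induction_on hx
    (fun _ hc r _ => smul_mem_of_mem_contractTS (hQ.2.symm ▸ hc) r) fun _ _ => Q.add_mem

theorem mem_of_sum_smul_mem_smul_top {p : Ideal C} {S : Finset (TwoSidedIdeal R)}
    (hS : (S : Set (TwoSidedIdeal R)) ⊆ primesOverTS R p) {x : S → R} (hx : ∀ Q : S, x Q ∉ Q.1)
    (hxS : ∀ Q Q' : S, ¬Q ≤ Q' → x Q' ∈ Q.1) {c : S → C}
    (hc : ∑ Q, c Q • x Q ∈ p • (⊤ : Submodule C R)) (Q : S) : c Q ∈ p := by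
  induction Q using WellFoundedGT.induction with
  | ind Q ih =>
    obtain ⟨hQ, hQp⟩ := hS Q.2
    have other_mem (Q' : S) (hne : Q' ≠ Q) : c Q' • x Q' ∈ Q.1 := by
      by_cases hle : Q ≤ Q'
      · exact smul_mem_of_mem_contractTS (hQp.symm ▸ ih Q' (hle.lt_of_ne' hne)) _
      · rw [Algebra.smul_def]
        exact Q.1.mul_mem_left _ _ (hxS Q Q' hle)
    have hcQ : c Q • x Q ∈ Q.1 := by
      classical
      have hsum := mem_of_mem_smul_top_of_mem_primesOverTS (hS Q.2) hc
      rw [← Finset.add_sum_erase _ _ (Finset.mem_univ Q)] at hsum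
      refine (add_mem_cancel_right ?_).1 hsum
      exact sum_mem fun Q' hQ' => other_mem Q' (Finset.ne_of_mem_erase hQ')
    exact hQp ▸ (hQ.mem_contractTS_or_mem_of_smul_mem hcQ).resolve_right (hx Q)

theorem linearIndependent_quotient_mk_of_forall {ι M : Type*} [Fintype ι] [AddCommGroup M]
    [Module C M] {p : Ideal C} {x : ι → M}
    (hx : ∀ c : ι → C, ∑ i, c i • x i ∈ p • (⊤ : Submodule C M) → ∀ i, c i ∈ p) :
    LinearIndependent (C ⧸ p)
      fun i => (Submodule.Quotient.mk (x i) : M ⧸ p • (⊤ : Submodule C M)) := by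
  rw [Fintype.linearIndependent_iff]
  intro g hg i
  choose c hc using fun i => Ideal.Quotient.mk_surjective (g i)
  obtain rfl : (fun i => Ideal.Quotient.mk p (c i)) = g := funext hc
  refine Ideal.Quotient.eq_zero_iff_mem.2 (hx c ?_ i)
  rw [← Submodule.Quotient.mk_eq_zero, ← Submodule.mkQ_apply, map_sum, ← hg]
  rfl

theorem card_le_finrank_of_subset_primesOverTS [Module.Finite C R] {p : Ideal C} (hp : p.IsPrime)
    {S : Finset (TwoSidedIdeal R)} (hS : (S : Set (TwoSidedIdeal R)) ⊆ primesOverTS R p) :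
    S.card ≤ Module.finrank (C ⧸ p) (R ⧸ p • (⊤ : Submodule C R)) := by
  choose x hx hxS using fun Q : S => (hS Q.2).1.exists_notMem_forall_mem S
  have : Nontrivial (C ⧸ p) := Ideal.Quotient.nontrivial_iff.2 hp.ne_top
  have : Module.Finite (C ⧸ p) (R ⧸ p • (⊤ : Submodule C R)) :=
    Module.Finite.of_restrictScalars_finite C _ _
  have hli := linearIndependent_quotient_mk_of_forall (x := x) fun _ hc =>
    mem_of_sum_smul_mem_smul_top hS hx (fun Q Q' h => hxS Q' Q Q.2 h) hc
  exact (Fintype.card_coe S).symm.trans_le hli.fintype_card_le_finrank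

theorem finite_primesOverTS [Module.Finite C R] {p : Ideal C} (hp : p.IsPrime) :
    (primesOverTS R p).Finite := by
  by_contra hinf
  obtain ⟨S, hS, hcard⟩ := Set.Infinite.exists_subset_card_eq hinf
    (Module.finrank (C ⧸ p) (R ⧸ p • (⊤ : Submodule C R)) + 1)
  have := card_le_finrank_of_subset_primesOverTS hp hS
  lia

theorem exists_mem_primesOverTS_natCast_le_tsHeight (hinj : Function.Injective (algebraMap C R))
    [Module.Finite C R] {m : ℕ} {f : Fin (m + 1) → Ideal C} (hf : StrictMono f)
    (hp : ∀ i, (f i).IsPrime) : ∃ Q ∈ primesOverTS R (f (Fin.last m)), (m : ℕ∞) ≤ tsHeight Q := by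
  obtain ⟨g, -, hg, hgf⟩ := exists_strictMono_lift_of_goingUp
    (fun _ _ hp hI => exists_mem_primesOverTS_ge hp hI) hf hp
    ((contractTS_bot hinj).trans_le bot_le)
  exact ⟨g (Fin.last m), hgf _, natCast_le_primeChainHeight hg fun i => (hgf i).1⟩

end Algebra

/-- Let `R` be a ring which is a finitely generated module over a central subring `C`,
and let `p` be a prime ideal of `C`.  Then there exists a prime ideal `Q` of `R` with
`Q ∩ C = p` and `height Q ≥ height p`. -/
theorem exists_prime_lying_over_with_ge_height {C R : Type*} [CommRing C] [Ring R]
    [Algebra C R] (hinj : Function.Injective (algebraMap C R)) [Module.Finite C R]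
    (p : Ideal C) (hp : p.IsPrime) :
    ∃ Q : TwoSidedIdeal R, IsPrimeTS Q ∧ contractTS (C := C) Q = p ∧
      cHeight p ≤ tsHeight Q := by
  have hnonempty : (primesOverTS R p).Nonempty :=
    (exists_mem_primesOverTS_ge hp ((contractTS_bot hinj).trans_le bot_le)).imp fun _ => And.right
  obtain ⟨Q, ⟨hQ, hQp⟩, hmax⟩ :=
    Set.exists_max_image _ tsHeight (finite_primesOverTS (R := R) hp) hnonempty
  refine ⟨Q, hQ, hQp, sSup_le ?_⟩
  rintro _ ⟨m, rfl, f, hf, hfp, rfl⟩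
  obtain ⟨Q', hQ', hm⟩ := exists_mem_primesOverTS_natCast_le_tsHeight (R := R) hinj hf hfp
  exact hm.trans (hmax Q' hQ')
end

section
/- Let R be a commutative noetherian ring which is equicodimensional (all maximal ideals have the same height) and Cohen-Macaulay. Then for every prime ideal p of R, Krull-dim(R) = Krull-dim(R/p) + height(p). -/
/-- A two-sided ideal is maximal. -/
def IsMaximalTS {R : Type*} [Ring R] (M : TwoSidedIdeal R) : Prop :=
  M ≠ ⊤ ∧ ∀ J : TwoSidedIdeal R, M < J → J = ⊤

/-- Krull dimension of a (possibly noncommutative) ring: the supremum of the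
heights of its prime two-sided ideals. -/
noncomputable def tsKdim (R : Type*) [Ring R] : ℕ∞ :=
  ⨆ P : {P : TwoSidedIdeal R // IsPrimeTS P}, tsHeight P.1

/-- Krull dimension of a commutative ring: the supremum of heights of primes. -/
noncomputable def cKdim (C : Type*) [CommRing C] : ℕ∞ :=
  ⨆ p : {p : Ideal C // p.IsPrime}, cHeight p.1

/-- The grade `G_C(I, M)`: the supremum of the lengths of `M`-regular sequences
consisting of elements of the ideal `I`. -/
noncomputable def cGrade {C : Type*} [CommRing C] (I : Ideal C) (M : Type*)
    [AddCommGroup M] [Module C M] : ℕ∞ :=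
  sSup {n : ℕ∞ | ∃ rs : List C, n = rs.length ∧ (∀ x ∈ rs, x ∈ I) ∧
    RingTheory.Sequence.IsRegular M rs}

/-- `M` is a maximal Cohen-Macaulay `C`-module: for every maximal ideal `m` of `C`,
the `m`-grade of `M` equals the height of `m` (that is, `Kdim (C_m)`). -/
def IsMaximalCohenMacaulay (C : Type*) [CommRing C] (M : Type*)
    [AddCommGroup M] [Module C M] : Prop :=
  ∀ m : Ideal C, m.IsMaximal → cGrade m M = cHeight m

/-!
Chains below and above `p` concatenate, so `dim R/p + ht p ≤ dim R` always holds. For the other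
inequality, choose a maximal ideal `m ⊇ p`; then `dim R = grade (m, R)`, and it suffices to show
`grade (m, R) ≤ dim R/p + ht p`, which may be checked after localizing at `m`.

Over a local ring one has `grade (m, M) ≤ grade (p, M) + dim R/p` for every nonzero finite module
`M`. As long as `p` contains an `M`-regular element `x`, replace `M` by `M/xM`: by a theorem of
Rees, `grade (m, M)` drops by at most one, while `grade (p, M)` drops by at least one. Once `p`
contains no regular element, it lies in an associated prime `q` of `M`, and then
`grade (m, M) ≤ dim R/q`: killing a regular element `x` of `m` moves `q` to an associated prime of
`M/xM` containing `q` and `x`, hence strictly larger. Finally, `grade (p, R) ≤ ht p`.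
-/

section OrderTheoreticDimension

variable {R : Type*} [CommRing R]

theorem cHeight_asIdeal (p : PrimeSpectrum R) : cHeight p.asIdeal = Order.height p := by
  apply le_antisymm
  · refine sSup_le ?_
    rintro _ ⟨n, rfl, f, hf, hprime, hlast⟩
    let chain : LTSeries (PrimeSpectrum R) := LTSeries.mk n (fun i => ⟨f i, hprime i⟩) hf
    have chain_last : chain.last = p := PrimeSpectrum.ext hlast
    exact Order.length_le_height chain_last.le
  · refine Order.height_le fun chain hlast => le_sSup ?_
    exact ⟨chain.length, rfl, fun i => (chain i).asIdeal, chain.strictMono,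
      fun i => (chain i).isPrime, congrArg PrimeSpectrum.asIdeal hlast⟩

theorem coe_cKdim [Nontrivial R] : (cKdim R : WithBot ℕ∞) = ringKrullDim R := by
  rw [ringKrullDim, Order.krullDim_eq_iSup_height_of_nonempty, cKdim,
    ← (PrimeSpectrum.equivSubtype R).iSup_comp]
  exact congrArg _ (iSup_congr cHeight_asIdeal)

theorem cKdim_quotient_asIdeal (p : PrimeSpectrum R) :
    cKdim (R ⧸ p.asIdeal) = Order.coheight p := by
  apply WithBot.coe_injective
  rw [coe_cKdim, ringKrullDim_quotient, Order.coheight_eq_krullDim_Ici]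
  rfl

theorem cKdim_quotient_add_cHeight_le (p : PrimeSpectrum R) :
    cKdim (R ⧸ p.asIdeal) + cHeight p.asIdeal ≤ cKdim R := by
  have : Nonempty (PrimeSpectrum R) := ⟨p⟩
  have : Nontrivial R := PrimeSpectrum.nonempty_iff_nontrivial.mp ‹_›
  rw [cKdim_quotient_asIdeal, cHeight_asIdeal, add_comm, ← WithBot.coe_le_coe, coe_cKdim,
    ringKrullDim, Order.krullDim_eq_iSup_height_add_coheight_of_nonempty, WithBot.coe_le_coe]
  exact le_iSup (fun q : PrimeSpectrum R => Order.height q + Order.coheight q) p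

end OrderTheoreticDimension

section Grade

open RingTheory.Sequence Pointwise

variable {R : Type*} [CommRing R]

theorem cGrade_le_iff {I : Ideal R} {M : Type*} [AddCommGroup M] [Module R M] {a : ℕ∞} :
    cGrade I M ≤ a ↔ ∀ rs : List R, (∀ x ∈ rs, x ∈ I) → IsRegular M rs → rs.length ≤ a := by
  refine sSup_le_iff.trans ⟨fun h rs hrs hreg => h _ ⟨rs, rfl, hrs, hreg⟩, ?_⟩
  rintro h _ ⟨rs, rfl, hrs, hreg⟩
  exact h rs hrs hreg

theorem length_le_cGrade {I : Ideal R} {M : Type*} [AddCommGroup M] [Module R M] {rs : List R}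
    (hrs : ∀ x ∈ rs, x ∈ I) (hreg : IsRegular M rs) : rs.length ≤ cGrade I M :=
  cGrade_le_iff.mp le_rfl rs hrs hreg

theorem cGrade_le_cGrade_maximalIdeal_localization (p : Ideal R) [p.IsPrime] :
    cGrade p R ≤ cGrade (IsLocalRing.maximalIdeal (Localization.AtPrime p))
      (Localization.AtPrime p) := by
  refine cGrade_le_iff.mpr fun rs hrs hreg => ?_
  have hrs' : ∀ y ∈ rs.map (algebraMap R (Localization.AtPrime p)),
      y ∈ IsLocalRing.maximalIdeal (Localization.AtPrime p) :=
    List.forall_mem_map.mpr fun x hx =>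
      (IsLocalization.AtPrime.to_map_mem_maximal_iff _ p x).mpr (hrs x hx)
  have hreg' := hreg.toIsWeaklyRegular.isRegular_of_isLocalization_of_mem
    (Localization.AtPrime p) p hrs
  simpa only [List.length_map] using length_le_cGrade hrs' hreg'

theorem cGrade_asIdeal_le_height [IsNoetherianRing R] (p : PrimeSpectrum R) :
    cGrade p.asIdeal R ≤ Order.height p := by
  refine cGrade_le_iff.mpr fun rs hrs hreg => ?_
  let S := Localization.AtPrime p.asIdeal
  let rs' := rs.map (algebraMap R S)
  have hreg' : IsRegular S rs' :=
    hreg.toIsWeaklyRegular.isRegular_of_isLocalization_of_mem S p.asIdeal hrs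
  have hdim : ringKrullDim (S ⧸ Ideal.ofList rs') + rs.length = Order.height p := by
    rw [← p.height_eq_orderHeight, ← IsLocalization.AtPrime.ringKrullDim_eq_height p.asIdeal S,
      ← ringKrullDim_add_length_eq_ringKrullDim_of_isRegular rs' hreg', List.length_map]
  have : Nontrivial (S ⧸ Ideal.ofList rs') :=
    Ideal.Quotient.nontrivial_iff.mpr fun h => hreg'.top_ne_smul (by simp [h])
  have hle : (rs.length : WithBot ℕ∞) ≤ Order.height p :=
    hdim ▸ le_add_of_nonneg_left ringKrullDim_nonneg_of_nontrivial
  exact_mod_cast hle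

variable {M : Type*} [AddCommGroup M] [Module R M] {I : Ideal R} {x : R}

theorem cGrade_quotSMulTop_add_one_le [Nontrivial (QuotSMulTop x M)] (hxI : x ∈ I)
    (hx : IsSMulRegular M x) : cGrade I (QuotSMulTop x M) + 1 ≤ cGrade I M := by
  have hne : {n : ℕ∞ | ∃ rs : List R, n = rs.length ∧ (∀ y ∈ rs, y ∈ I) ∧
      IsRegular (QuotSMulTop x M) rs}.Nonempty :=
    ⟨0, [], rfl, List.forall_mem_nil _, IsRegular.nil R _⟩
  rw [cGrade, ENat.sSup_add hne]
  refine iSup₂_le ?_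
  rintro _ ⟨rs, rfl, hrs, hreg⟩
  exact length_le_cGrade (rs := x :: rs) (List.forall_mem_cons.mpr ⟨hxI, hrs⟩) (hreg.cons hx)

theorem ideal_smul_top_quotSMulTop_ne_top (hxI : x ∈ I) (hI : I • (⊤ : Submodule R M) ≠ ⊤) :
    I • (⊤ : Submodule R (QuotSMulTop x M)) ≠ ⊤ := by
  have hxM : x • (⊤ : Submodule R M) ≤ I • ⊤ := by
    rw [← Submodule.ideal_span_singleton_smul]
    exact Submodule.smul_mono_left ((Ideal.span_singleton_le_iff_mem I).mpr hxI)
  have hmap : I • (⊤ : Submodule R (QuotSMulTop x M)) =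
      (I • ⊤ : Submodule R M).map (x • (⊤ : Submodule R M)).mkQ := by
    rw [Submodule.map_smul'', Submodule.map_top, Submodule.range_mkQ]
  rwa [hmap, Ne, Submodule.map_mkQ_eq_top, sup_eq_right.mpr hxM]

end Grade

section GradeDrop

open RingTheory.Sequence CategoryTheory Abelian

universe u v

variable {R : Type u} [CommRing R] [Small.{v} R] {M : Type v} [AddCommGroup M] [Module R M]
  {x : R}

theorem subsingleton_ext_quotSMulTop (hx : IsSMulRegular M x) {N : ModuleCat.{v} R} {i : ℕ}
    (hi : Subsingleton (Ext N (ModuleCat.of R M) i))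
    (hi' : Subsingleton (Ext N (ModuleCat.of R M) (i + 1))) :
    Subsingleton (Ext N (ModuleCat.of R (QuotSMulTop x M)) i) := by
  have hexact := Ext.covariant_sequence_exact₃' N
    (IsSMulRegular.smulShortComplex_shortExact (M := ModuleCat.of R M) hx) i (i + 1) rfl
  exact AddCommGrpCat.subsingleton_of_isZero <| hexact.isZero_of_both_zeros
    ((AddCommGrpCat.isZero_of_iff_subsingleton.mpr hi).eq_zero_of_src _)
    ((AddCommGrpCat.isZero_of_iff_subsingleton.mpr hi').eq_zero_of_tgt _)

variable [IsNoetherianRing R] [Module.Finite R M] {I : Ideal R}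

theorem cGrade_le_cGrade_quotSMulTop_add_one (hI : I • (⊤ : Submodule R M) ≠ ⊤)
    (hxI : x ∈ I) (hx : IsSMulRegular M x) : cGrade I M ≤ cGrade I (QuotSMulTop x M) + 1 := by
  refine cGrade_le_iff.mpr fun rs hrs hreg => ?_
  rcases hn : rs.length with _ | n
  · exact zero_le
  have hext : ∀ i < n + 1,
      Subsingleton (Ext (ModuleCat.of R (Shrink.{v} (R ⧸ I))) (ModuleCat.of R M) i) :=
    ((ModuleCat.exists_isRegular_tfae I (n + 1) (ModuleCat.of R M) hI.lt_top).out 1 3 rfl rfl).mpr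
      ⟨rs, hn, hrs, hreg⟩
  have hext_quot : ∀ i < n, Subsingleton
      (Ext (ModuleCat.of R (Shrink.{v} (R ⧸ I))) (ModuleCat.of R (QuotSMulTop x M)) i) :=
    fun i hi => subsingleton_ext_quotSMulTop hx (hext i (by lia)) (hext (i + 1) (by lia))
  obtain ⟨rs', hlength, hrs', hreg'⟩ : ∃ rs' : List R,
      rs'.length = n ∧ (∀ r ∈ rs', r ∈ I) ∧ IsRegular (QuotSMulTop x M) rs' :=
    ((ModuleCat.exists_isRegular_tfae I n (ModuleCat.of R (QuotSMulTop x M))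
      (ideal_smul_top_quotSMulTop_ne_top hxI hI).lt_top).out 1 3 rfl rfl).mp hext_quot
  rw [Nat.cast_succ, ← hlength]
  gcongr
  exact length_le_cGrade hrs' hreg'

end GradeDrop

section AssociatedPrimes

open RingTheory.Sequence Pointwise

universe u v

variable {R : Type u} [CommRing R] [IsNoetherianRing R] {M : Type v} [AddCommGroup M] [Module R M]
  {x : R}

theorem notMem_of_isSMulRegular_of_isAssociatedPrime {p : Ideal R} (hx : IsSMulRegular M x)
    (hp : IsAssociatedPrime p M) : x ∉ p := by
  intro hxp
  have hmem : x ∈ ⋃ q ∈ associatedPrimes R M, (q : Set R) := Set.mem_biUnion hp hxp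
  rw [biUnion_associatedPrimes_eq_compl_regular] at hmem
  exact hmem hx

variable [Module.Finite R M]

theorem exists_mem_isSMulRegular {I : Ideal R} (hI : ∀ q, IsAssociatedPrime q M → ¬ I ≤ q) :
    ∃ y ∈ I, IsSMulRegular M y := by
  have hnot : ¬ (I : Set R) ⊆ ⋃ q ∈ associatedPrimes R M, (q : Set R) := fun hsub =>
    have ⟨q, hq, hIq⟩ := (Ideal.subset_union_prime_finite (associatedPrimes.finite R M)
      (f := id) ⊤ ⊤ fun _ hq _ _ => hq.isPrime).mp hsub
    hI q hq hIq
  rw [biUnion_associatedPrimes_eq_compl_regular] at hnot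
  obtain ⟨y, hyI, hy⟩ := Set.not_subset.mp hnot
  exact ⟨y, hyI, not_not.mp hy⟩

theorem torsionBySet_not_le_smul_top (hxJ : x ∈ Ring.jacobson R) (hx : IsSMulRegular M x)
    {s : Set R} (hs : Submodule.torsionBySet R M s ≠ ⊥) :
    ¬ Submodule.torsionBySet R M s ≤ x • (⊤ : Submodule R M) := by
  intro hle
  refine hs (Submodule.eq_bot_of_le_smul_of_le_jacobson_bot (Ideal.span {x}) _
    (IsNoetherian.noetherian _) ?_ ?_)
  -- As `x` is regular, `x • w` is `s`-torsion only if `w` is: the torsion is `x` times itself.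
  · intro v hv
    obtain ⟨w, -, rfl⟩ := (Submodule.mem_smul_pointwise_iff_exists _ _ _).mp (hle hv)
    have hw : w ∈ Submodule.torsionBySet R M s :=
      (Submodule.mem_torsionBySet_iff s w).mpr fun a => hx <| by
        simpa only [smul_comm x, smul_zero] using (Submodule.mem_torsionBySet_iff s _).mp hv a
    exact Submodule.smul_mem_smul (Ideal.mem_span_singleton_self x) hw
  · rwa [Ideal.span_singleton_le_iff_mem, Ideal.jacobson_bot]

theorem exists_isAssociatedPrime_quotSMulTop {p : Ideal R} (hxJ : x ∈ Ring.jacobson R)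
    (hx : IsSMulRegular M x) (hp : IsAssociatedPrime p M) :
    ∃ q, IsAssociatedPrime q (QuotSMulTop x M) ∧ p ≤ q ∧ x ∈ q := by
  obtain ⟨hprime, u, hu⟩ := isAssociatedPrime_iff.mp hp
  have htorsion : Submodule.torsionBySet R M p ≠ ⊥ := by
    refine (Submodule.ne_bot_iff _).mpr ⟨u, ?_, ?_⟩
    · exact (Submodule.mem_torsionBySet_iff _ _).mpr fun a => by
        simpa [Submodule.mem_colon_singleton] using hu.le a.2
    · rintro rfl
      exact hprime.ne_top (by simp [hu])
  obtain ⟨v, hv, hvx⟩ := SetLike.not_le_iff_exists.mp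
    (torsionBySet_not_le_smul_top hxJ hx htorsion)
  obtain ⟨q, hq, hle⟩ := exists_le_isAssociatedPrime_of_isNoetherianRing R
    ((x • (⊤ : Submodule R M)).mkQ v) (by simpa using hvx)
  refine ⟨q, hq, fun a ha => hle ?_, hle ?_⟩
  · rw [Submodule.mem_colon_singleton, ← map_smul,
      (Submodule.mem_torsionBySet_iff _ _).mp hv ⟨a, ha⟩, map_zero]
    exact Submodule.zero_mem _
  · rw [Submodule.mem_colon_singleton, ← map_smul, Submodule.mem_bot, Submodule.mkQ_apply,
      Submodule.Quotient.mk_eq_zero]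
    exact Submodule.smul_mem_pointwise_smul v x ⊤ trivial

theorem cGrade_le_coheight_of_isAssociatedPrime {I : Ideal R} (hIJ : I ≤ Ring.jacobson R)
    {p : PrimeSpectrum R} (hp : IsAssociatedPrime p.asIdeal M) :
    cGrade I M ≤ Order.coheight p := by
  refine cGrade_le_iff.mpr fun rs hrs hreg => ?_
  induction rs generalizing M p with
  | nil => exact zero_le
  | cons x rs ih =>
    obtain ⟨hxI, hrs⟩ := List.forall_mem_cons.mp hrs
    obtain ⟨hx, hreg⟩ := (isRegular_cons_iff M x rs).mp hreg
    obtain ⟨q, hq, hpq, hxq⟩ := exists_isAssociatedPrime_quotSMulTop (hIJ hxI) hx hp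
    let Q : PrimeSpectrum R := ⟨q, hq.isPrime⟩
    have hlt : p < Q := lt_of_le_of_ne hpq fun h =>
      notMem_of_isSMulRegular_of_isAssociatedPrime hx hp (h ▸ hxq)
    calc ((x :: rs).length : ℕ∞) = rs.length + 1 := by simp
      _ ≤ Order.coheight Q + 1 := by gcongr; exact ih (p := Q) hq hrs hreg
      _ ≤ Order.coheight p := Order.coheight_add_one_le hlt

theorem cGrade_le_cGrade_asIdeal_add_coheight [Small.{v} R] [Nontrivial M] {I : Ideal R}
    (hIJ : I ≤ Ring.jacobson R) {p : PrimeSpectrum R} (hpI : p.asIdeal ≤ I) :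
    cGrade I M ≤ cGrade p.asIdeal M + Order.coheight p := by
  refine ENat.forall_natCast_le_iff_le.mp fun n hn => ?_
  induction n generalizing M with
  | zero => exact zero_le
  | succ n ih =>
    by_cases hass : ∃ q, IsAssociatedPrime q M ∧ p.asIdeal ≤ q
    · obtain ⟨q, hq, hpq⟩ := hass
      let Q : PrimeSpectrum R := ⟨q, hq.isPrime⟩
      have hpQ : p ≤ Q := hpq
      calc ((n + 1 : ℕ) : ℕ∞) ≤ cGrade I M := hn
        _ ≤ Order.coheight Q := cGrade_le_coheight_of_isAssociatedPrime hIJ hq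
        _ ≤ Order.coheight p := Order.coheight_anti hpQ
        _ ≤ cGrade p.asIdeal M + Order.coheight p := le_add_self
    · push Not at hass
      obtain ⟨x, hxp, hx⟩ := exists_mem_isSMulRegular hass
      have hI : I • (⊤ : Submodule R M) ≠ ⊤ :=
        (Submodule.top_ne_ideal_smul_of_le_jacobson_annihilator
          (hIJ.trans Ideal.ringJacobson_le_jacobson)).symm
      have : Nontrivial (QuotSMulTop x M) := Submodule.Quotient.nontrivial_iff.mpr
        (Submodule.top_ne_pointwise_smul_of_mem_jacobson_annihilator
          (Ideal.ringJacobson_le_jacobson (hIJ (hpI hxp)))).symm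
      have hn' : (n : ℕ∞) ≤ cGrade I (QuotSMulTop x M) :=
        (ENat.add_le_add_iff_right ENat.one_ne_top).mp <|
          hn.trans (cGrade_le_cGrade_quotSMulTop_add_one hI (hpI hxp) hx)
      calc ((n + 1 : ℕ) : ℕ∞) = n + 1 := Nat.cast_succ n
        _ ≤ cGrade p.asIdeal (QuotSMulTop x M) + Order.coheight p + 1 := by gcongr; exact ih hn'
        _ = cGrade p.asIdeal (QuotSMulTop x M) + 1 + Order.coheight p := add_right_comm _ _ _
        _ ≤ cGrade p.asIdeal M + Order.coheight p := by
          gcongr; exact cGrade_quotSMulTop_add_one_le hxp hx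

end AssociatedPrimes

section Globalization

variable {R : Type*} [CommRing R]

theorem strictMono_comap_localization (m : Ideal R) [m.IsPrime] :
    StrictMono (PrimeSpectrum.comap (algebraMap R (Localization.AtPrime m))) :=
  Monotone.strictMono_of_injective (fun _ _ h => Ideal.comap_mono h)
    (PrimeSpectrum.localization_comap_injective _ m.primeCompl)

theorem exists_comap_localization_eq {m : Ideal R} [m.IsPrime] {p : PrimeSpectrum R}
    (hpm : p.asIdeal ≤ m) :
    ∃ q, PrimeSpectrum.comap (algebraMap R (Localization.AtPrime m)) q = p := by
  rw [← Set.mem_range, PrimeSpectrum.localization_comap_range _ m.primeCompl]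
  exact Set.disjoint_compl_left_iff_subset.mpr hpm

theorem cGrade_le_coheight_add_height [IsNoetherianRing R] {m : Ideal R} [m.IsPrime]
    {p : PrimeSpectrum R} (hpm : p.asIdeal ≤ m) :
    cGrade m R ≤ Order.coheight p + Order.height p := by
  obtain ⟨q, rfl⟩ := exists_comap_localization_eq hpm
  let S := Localization.AtPrime m
  have : IsNoetherianRing S := IsLocalization.isNoetherianRing m.primeCompl S inferInstance
  calc cGrade m R
    _ ≤ cGrade (IsLocalRing.maximalIdeal S) S := cGrade_le_cGrade_maximalIdeal_localization m
    _ ≤ cGrade q.asIdeal S + Order.coheight q := cGrade_le_cGrade_asIdeal_add_coheight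
        (IsLocalRing.ringJacobson_eq_maximalIdeal S).ge (IsLocalRing.le_maximalIdeal_of_isPrime _)
    _ ≤ Order.height q + Order.coheight q := by gcongr; exact cGrade_asIdeal_le_height q
    _ = Order.coheight q + Order.height q := add_comm _ _
    _ ≤ _ := add_le_add
        (Order.coheight_le_coheight_apply_of_strictMono _ (strictMono_comap_localization m) q)
        (Order.height_le_height_apply_of_strictMono _ (strictMono_comap_localization m) q)

end Globalization

theorem kdim_eq_kdim_quotient_add_height_of_CM_general {R : Type*} [CommRing R]
    [IsNoetherianRing R] {m p : Ideal R} [m.IsPrime] [hp : p.IsPrime] (hpm : p ≤ m)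
    (hm : cGrade m R = cKdim R) : cKdim R = cKdim (R ⧸ p) + cHeight p := by
  let P : PrimeSpectrum R := ⟨p, hp⟩
  refine le_antisymm ?_ (cKdim_quotient_add_cHeight_le P)
  calc cKdim R = cGrade m R := hm.symm
    _ ≤ Order.coheight P + Order.height P := cGrade_le_coheight_add_height hpm
    _ = cKdim (R ⧸ p) + cHeight p := by
      rw [← cKdim_quotient_asIdeal P, ← cHeight_asIdeal P]

/-- Let `R` be a commutative noetherian ring which is equicodimensional (all maximal
ideals have the same height, namely `Kdim R`) and Cohen-Macaulay.  Then for every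
prime ideal `p` of `R`, `Kdim R = Kdim (R/p) + height p`. -/
theorem kdim_eq_kdim_quotient_add_height_of_CM {R : Type*} [CommRing R] [IsNoetherianRing R]
    (hequi : ∀ m : Ideal R, m.IsMaximal → cHeight m = cKdim R)
    (hCM : ∀ m : Ideal R, m.IsMaximal → cGrade m R = cHeight m)
    (p : Ideal R) (hp : p.IsPrime) :
    cKdim R = cKdim (R ⧸ p) + cHeight p := by
  obtain ⟨m, hm, hpm⟩ := p.exists_le_maximal hp.ne_top
  exact kdim_eq_kdim_quotient_add_height_of_CM_general hpm ((hCM m hm).trans (hequi m hm))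
end

section
/- Let R be a prime noetherian ring finitely generated as a module over its center Z(R), with finite global dimension, which is Z(R)-Macaulay, and which is Azumaya in height one (the non-Azumaya locus in Maxspec(Z(R)) has codimension at least 2). Then the Azumaya locus of R equals the smooth locus of Z(R): for a maximal ideal m of Z(R), R_m is Azumaya over Z(R)_m if and only if Z(R)_m has finite global dimension. -/
universe u

open CategoryTheory in
/-- The `i`-th Ext group `Ext^i_S(M, N)` of (left) modules over an arbitrary ring. -/
noncomputable def ExtGroup (S : Type u) [Ring S] (M N : Type u) [AddCommGroup M] [Module S M]
    [AddCommGroup N] [Module S N] (i : ℕ) : Type _ :=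
  letI : HasDerivedCategory (ModuleCat S) := HasDerivedCategory.standard _
  letI : HasExt (ModuleCat S) := hasExt_of_hasDerivedCategory _
  Abelian.Ext (ModuleCat.of S M) (ModuleCat.of S N) i

/-- The homological grade `j_S(M) = min { i | Ext^i_S(M, S) ≠ 0 }` (valued `∞` if
no such `i` exists). -/
noncomputable def homGrade (S : Type u) [Ring S] (M : Type u) [AddCommGroup M]
    [Module S M] : ℕ∞ :=
  sInf {n : ℕ∞ | ∃ i : ℕ, n = i ∧ ¬ Subsingleton (ExtGroup S M S i)}

/-- The left ideal of `Rᵐᵒᵖ` corresponding to a two-sided ideal of `R`; the quotient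
`Rᵐᵒᵖ ⧸ tsOpIdeal P` realises `R/P` as a right `R`-module. -/
def tsOpIdeal {R : Type*} [Ring R] (P : TwoSidedIdeal R) : Ideal Rᵐᵒᵖ where
  carrier := {x | x.unop ∈ P}
  add_mem' ha hb := by simpa using P.add_mem ha hb
  zero_mem' := by simpa using P.zero_mem
  smul_mem' r x hx := by
    show (r * x).unop ∈ P
    rw [MulOpposite.unop_mul]
    exact P.mul_mem_right _ _ hx

/-- A ring has finite (left) global dimension: there is an `n` such that all Ext groups
vanish in degrees above `n`. -/
def HasFiniteGlobalDimension (S : Type u) [Ring S] : Prop :=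
  ∃ n : ℕ, ∀ (M N : Type u) [AddCommGroup M] [Module S M] [AddCommGroup N] [Module S N],
    ∀ i : ℕ, n < i → Subsingleton (ExtGroup S M N i)

open TensorProduct in
/-- The canonical map `R ⊗_C Rᵒᵖ → End_C(R)`, `a ⊗ b ↦ (x ↦ a * x * b)`. -/
noncomputable def azuMap (C R : Type*) [CommRing C] [Ring R] [Algebra C R] :
    R ⊗[C] Rᵐᵒᵖ →ₗ[C] (R →ₗ[C] R) :=
  TensorProduct.lift <| LinearMap.mk₂ C
    (fun a b => (LinearMap.mulLeft C a).comp (LinearMap.mulRight C b.unop))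
    (by intro a a' b; ext x; simp [add_mul])
    (by intro c a b; ext x; simp [smul_mul_assoc])
    (by intro a b b'; ext x; simp [mul_add])
    (by intro c a b; ext x; simp [mul_smul_comm])

/-- `R` is an Azumaya algebra over the commutative ring `C`: it is a faithful
finitely generated projective `C`-module and the enveloping map
`R ⊗_C Rᵒᵖ → End_C(R)` is bijective. -/
def IsAzumayaAlg (C R : Type*) [CommRing C] [Ring R] [Algebra C R] : Prop :=
  Module.Finite C R ∧ Module.Projective C R ∧ FaithfulSMul C R ∧
    Function.Bijective (azuMap C R)

/-!
The centre `Z` of `R` is noetherian by Formanek's form of the Eakin–Nagata theorem. Let `A = Z_m`.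

If `R_m` is Azumaya over `A`, it is free and nonzero, so every `A`-module `M` is a direct summand of
`M ⊗ R_m`, which is the localization of the `R`-module induced from `M`; hence finite global
dimension passes from `R` to `A`.

Conversely, if `A` has finite global dimension, then no finite `A`-module has projective dimension
exceeding `dim A`. Dividing `R_m` by a regular sequence of length `dim A` raises its projective
dimension by `dim A`, so `R_m` is free. The enveloping map `R_m ⊗ R_mᵒᵖ → End R_m` is then a map
between free modules of equal rank, and its determinant lies in no prime of height at most one: at
height one this is the Azumaya hypothesis, which also covers height zero unless `Z` is a field,
where `R` is central simple and the density theorem applies. By Krull's principal ideal theorem the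
determinant is a unit.
-/

section QuotientOfQuotient

variable {R M : Type*} [Ring R] [AddCommGroup M] [Module R M]

lemma lt_comap_mkQ (N : Submodule R M) {S : Submodule R (M ⧸ N)} (hS : S ≠ ⊥) :
    N < S.comap N.mkQ := by
  refine lt_of_le_of_ne (N.le_comap_mkQ S) fun h => hS ?_
  rw [← Submodule.map_comap_eq_of_surjective N.mkQ_surjective S, ← h, Submodule.mkQ_map_self]

/-- Noether's third isomorphism `M / π⁻¹(S) ≃ (M / N) / S`, indexed by the submodules `S` of
`M / N` instead of those of `M` containing `N`. -/
noncomputable def quotientComapMkQEquiv (N : Submodule R M) (S : Submodule R (M ⧸ N)) :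
    (M ⧸ S.comap N.mkQ) ≃ₗ[R] (M ⧸ N) ⧸ S :=
  (Submodule.quotientQuotientEquivQuotient N _ (N.le_comap_mkQ S)).symm ≪≫ₗ
    Submodule.quotEquivOfEq _ _ (Submodule.map_comap_eq_of_surjective N.mkQ_surjective S)

end QuotientOfQuotient

section Formanek

open Pointwise

variable {A M : Type*} [CommRing A] [AddCommGroup M] [Module A M]

lemma mem_annihilator_quotient_iff {N : Submodule A M} {a : A} :
    a ∈ Module.annihilator A (M ⧸ N) ↔ a • (⊤ : Submodule A M) ≤ N := by
  simp only [Module.mem_annihilator, N.mkQ_surjective.forall, Submodule.mkQ_apply,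
    ← Submodule.Quotient.mk_smul, Submodule.Quotient.mk_eq_zero]
  exact ⟨fun h => by rintro _ ⟨x, -, rfl⟩; exact h x,
    fun h x => h (Submodule.smul_mem_pointwise_smul x a ⊤ trivial)⟩

lemma isNoetherian_quotient_annihilator [IsNoetherian A M] :
    IsNoetherian A (A ⧸ Module.annihilator A M) := by
  obtain ⟨s, hs⟩ := Module.Finite.fg_top (R := A) (M := M)
  let evalAtGenerators : A →ₗ[A] (s → M) :=
    LinearMap.pi fun x => LinearMap.toSpanSingleton A M x
  have ker_le : LinearMap.ker evalAtGenerators ≤ Module.annihilator A M := by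
    intro a ha
    rw [← Submodule.annihilator_top, ← hs, Submodule.mem_annihilator_span]
    exact fun x => congrFun ha x
  have : IsNoetherian A (A ⧸ LinearMap.ker evalAtGenerators) :=
    isNoetherian_of_linearEquiv evalAtGenerators.quotKerEquivRange.symm
  exact isNoetherian_of_surjective (Submodule.factor ker_le)
    (LinearMap.range_eq_top.2 (Submodule.factor_surjective ker_le))

lemma isNoetherian_of_annihilator_le {N : Type*} [AddCommGroup N] [Module A N]
    [IsNoetherian A N] [Module.Finite A M]
    (h : Module.annihilator A N ≤ Module.annihilator A M) : IsNoetherian A M := by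
  have := isNoetherian_quotient_annihilator (A := A) (M := N)
  have isNoetherian_span (x : M) : IsNoetherian A (Submodule.span A {x}) := by
    have annihilator_le_ker :
        Module.annihilator A N ≤ LinearMap.ker (LinearMap.toSpanSingleton A M x) :=
      fun a ha => Module.mem_annihilator.1 (h ha) x
    rw [← LinearMap.range_toSpanSingleton, ← Submodule.range_liftQ _ _ annihilator_le_ker]
    infer_instance
  obtain ⟨s, hs⟩ := Module.Finite.fg_top (R := A) (M := M)
  rw [← isNoetherian_top_iff, ← hs, ← Set.biUnion_of_singleton (s : Set M),
    Submodule.span_iUnion₂, iSup_subtype']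
  infer_instance

lemma exists_maximal_annihilator_quotient_le [Module.Finite A M] :
    ∃ N : Submodule A M,
      Maximal (fun N => Module.annihilator A (M ⧸ N) ≤ Module.annihilator A M) N := by
  refine (zorn_le_nonempty₀
    {N : Submodule A M | Module.annihilator A (M ⧸ N) ≤ Module.annihilator A M}
    (fun c hc chain N hN => ⟨sSup c, fun a ha => ?_, fun _ => le_sSup⟩) ⊥ ?_).imp
    fun _ => And.right
  · have compact : IsCompactElement (a • (⊤ : Submodule A M)) :=
      (Submodule.fg_iff_compact _).1 (Module.Finite.fg_top.map _)
    obtain ⟨N', hN', le⟩ :=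
      (CompleteLattice.isCompactElement_iff_le_of_directed_sSup_le _ _).1 compact c
        ⟨N, hN⟩ chain.directedOn (mem_annihilator_quotient_iff.1 ha)
    exact hc hN' (mem_annihilator_quotient_iff.2 le)
  · exact (LinearEquiv.annihilator_eq (Submodule.quotEquivOfEqBot ⊥ rfl)).le

lemma isNoetherian_of_forall_isNoetherian_quotSMulTop [Module.Finite A M]
    (h : ∀ a ∉ Module.annihilator A M, IsNoetherian A (QuotSMulTop a M)) :
    IsNoetherian A M := by
  obtain ⟨N, hN⟩ := exists_maximal_annihilator_quotient_le (A := A) (M := M)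
  have fg_of_lt (N' : Submodule A M) (lt : N < N') : N'.FG := by
    obtain ⟨a, ha, haM⟩ := SetLike.not_le_iff_exists.1 (hN.not_prop_of_gt lt)
    have := h a haM
    refine Submodule.fg_of_fg_map_of_fg_inf_ker (a • (⊤ : Submodule A M)).mkQ
      (IsNoetherian.noetherian _) ?_
    rw [Submodule.ker_mkQ, inf_eq_right.2 (mem_annihilator_quotient_iff.1 ha)]
    exact Module.Finite.fg_top.map _
  have : IsNoetherian A (M ⧸ N) := by
    refine ⟨fun S => ?_⟩
    rcases eq_or_ne S ⊥ with rfl | hS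
    · exact Submodule.fg_bot
    · rw [← Submodule.map_comap_eq_of_surjective N.mkQ_surjective S]
      exact (fg_of_lt _ (lt_comap_mkQ N hS)).map _
  exact isNoetherian_of_annihilator_le hN.prop

lemma isNoetherian_restrictScalars {R : Type*} [Ring R] [Algebra A R] [Module R M]
    [IsScalarTower A R M] [IsNoetherian R M] [Module.Finite A M] : IsNoetherian A M := by
  suffices ∀ N : Submodule R M, IsNoetherian A (M ⧸ N) from
    have := this ⊥
    isNoetherian_of_linearEquiv
      ((Submodule.quotEquivOfEqBot (⊥ : Submodule R M) rfl).restrictScalars A)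
  refine fun N => IsNoetherian.induction (P := fun N : Submodule R M => IsNoetherian A (M ⧸ N))
    (fun N ih => ?_) N
  refine isNoetherian_of_forall_isNoetherian_quotSMulTop fun a ha => ?_
  let aQ : Submodule R (M ⧸ N) := a • ⊤
  have aQ_ne_bot : aQ ≠ ⊥ := by
    refine fun h => ha (Module.mem_annihilator.2 fun x => ?_)
    exact (Submodule.mem_bot R).1 (h ▸ Submodule.smul_mem_pointwise_smul x a ⊤ trivial)
  have := ih _ (lt_comap_mkQ N aQ_ne_bot)
  have : IsNoetherian A ((M ⧸ N) ⧸ aQ) :=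
    isNoetherian_of_linearEquiv ((quotientComapMkQEquiv N aQ).restrictScalars A)
  exact isNoetherian_of_linearEquiv (Submodule.Quotient.restrictScalarsEquiv A aQ).symm

lemma isNoetherianRing_of_finite_of_faithfulSMul (A R : Type*) [CommRing A] [Ring R]
    [Algebra A R] [IsNoetherianRing R] [Module.Finite A R] [FaithfulSMul A R] :
    IsNoetherianRing A :=
  have : IsNoetherian A R := isNoetherian_restrictScalars (R := R)
  isNoetherian_of_injective (Algebra.linearMap A R) (FaithfulSMul.algebraMap_injective A R)

end Formanek

section ProjectiveDimension

open CategoryTheory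

variable {A M N : Type u} [Ring A] [AddCommGroup M] [Module A M] [AddCommGroup N] [Module A N]
  {n : ℕ}

lemma hasProjectiveDimensionLT_of_linearEquiv (e : M ≃ₗ[A] N)
    [HasProjectiveDimensionLT (ModuleCat.of A M) n] :
    HasProjectiveDimensionLT (ModuleCat.of A N) n :=
  hasProjectiveDimensionLT_of_iso e.toModuleIso n

lemma hasProjectiveDimensionLT_of_subsingleton [Subsingleton M] :
    HasProjectiveDimensionLT (ModuleCat.of A M) n :=
  have := ModuleCat.isZero_of_subsingleton (ModuleCat.of A M) |>.hasProjectiveDimensionLT_zero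
  hasProjectiveDimensionLT_of_ge _ 0 n n.zero_le

/-- An injection `M → N` identifies `M` with the kernel of `N → N / M`. -/
noncomputable def linearEquivKerMkQRange (f : M →ₗ[A] N) (hf : Function.Injective f) :
    M ≃ₗ[A] LinearMap.ker (LinearMap.range f).mkQ :=
  LinearEquiv.ofInjective f hf ≪≫ₗ LinearEquiv.ofEq _ _ (Submodule.ker_mkQ _).symm

lemma hasProjectiveDimensionLT_of_injective_of_quotient_range (f : M →ₗ[A] N)
    (hf : Function.Injective f) [HasProjectiveDimensionLT (ModuleCat.of A M) n]
    [HasProjectiveDimensionLT (ModuleCat.of A (N ⧸ LinearMap.range f)) n] :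
    HasProjectiveDimensionLT (ModuleCat.of A N) n :=
  (LinearMap.shortExact_shortComplexKer
    (LinearMap.range f).mkQ_surjective).hasProjectiveDimensionLT_X₂ n
      (hasProjectiveDimensionLT_of_linearEquiv (linearEquivKerMkQRange f hf)) ‹_›

lemma hasProjectiveDimensionLT_of_injective (f : M →ₗ[A] N)
    (hf : Function.Injective f) [HasProjectiveDimensionLT (ModuleCat.of A N) n]
    [HasProjectiveDimensionLT (ModuleCat.of A (N ⧸ LinearMap.range f)) (n + 1)] :
    HasProjectiveDimensionLT (ModuleCat.of A M) n :=
  have : HasProjectiveDimensionLT (ModuleCat.of A (LinearMap.ker (LinearMap.range f).mkQ)) n :=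
    (LinearMap.shortExact_shortComplexKer
      (LinearMap.range f).mkQ_surjective).hasProjectiveDimensionLT_X₁ n ‹_› ‹_›
  hasProjectiveDimensionLT_of_linearEquiv (linearEquivKerMkQRange f hf).symm

end ProjectiveDimension

section LocalRing

open CategoryTheory IsLocalRing RingTheory.Sequence Pointwise

variable {A : Type u} [CommRing A] [IsNoetherianRing A] [IsLocalRing A]

lemma exists_injective_residue_of_forall_not_isSMulRegular {M : Type*} [AddCommGroup M]
    [Module A M] [Module.Finite A M] (h : ∀ x ∈ maximalIdeal A, ¬ IsSMulRegular M x) :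
    ∃ f : (A ⧸ maximalIdeal A) →ₗ[A] M, Function.Injective f := by
  have exists_ne_zero : ∃ f : (A ⧸ maximalIdeal A) →ₗ[A] M, f ≠ 0 := by
    by_contra! eq_zero
    obtain ⟨x, hx, hreg⟩ := IsSMulRegular.subsingleton_linearMap_iff.1
      (subsingleton_of_forall_eq (0 : (A ⧸ maximalIdeal A) →ₗ[A] M) eq_zero)
    exact h x (by rwa [Ideal.annihilator_quotient] at hx) hreg
  have : IsSimpleModule A (A ⧸ maximalIdeal A) :=
    isSimpleModule_iff_isCoatom.2 (Ideal.isMaximal_def.1 inferInstance)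
  exact exists_ne_zero.imp fun f hf => f.injective_or_eq_zero.resolve_right hf

lemma hasProjectiveDimensionLT_of_quotSMulTop {M : Type u} [AddCommGroup M] [Module A M]
    [Module.Finite A M] {x : A} (hx : x ∈ maximalIdeal A) (hreg : IsSMulRegular M x) {n : ℕ}
    [HasProjectiveDimensionLT (ModuleCat.of A (QuotSMulTop x M)) n] :
    HasProjectiveDimensionLT (ModuleCat.of A M) n := by
  have succ_eq := ModuleCat.projectiveDimension_quotSMulTop_eq_succ_of_isSMulRegular
    (ModuleCat.of A M) x hreg hx
  refine projectiveDimension_lt_iff.1 (lt_of_le_of_lt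
    ((le_add_of_nonneg_right zero_le_one).trans_eq succ_eq.symm) ?_)
  exact projectiveDimension_lt_iff.2 ‹_›

lemma hasProjectiveDimensionLT_of_residue {n : ℕ}
    [HasProjectiveDimensionLT (ModuleCat.of A (A ⧸ maximalIdeal A)) n]
    (M : Type u) [AddCommGroup M] [Module A M] [Module.Finite A M] :
    HasProjectiveDimensionLT (ModuleCat.of A M) n := by
  suffices ∀ L : Submodule A M, HasProjectiveDimensionLT (ModuleCat.of A (M ⧸ L)) n from
    have := this ⊥
    hasProjectiveDimensionLT_of_linearEquiv (Submodule.quotEquivOfEqBot (⊥ : Submodule A M) rfl)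
  refine fun L => IsNoetherian.induction
    (P := fun L : Submodule A M => HasProjectiveDimensionLT (ModuleCat.of A (M ⧸ L)) n)
    (fun L ih => ?_) L
  rcases subsingleton_or_nontrivial (M ⧸ L) with _ | _
  · exact hasProjectiveDimensionLT_of_subsingleton
  have quotient (S : Submodule A (M ⧸ L)) (hS : S ≠ ⊥) :
      HasProjectiveDimensionLT (ModuleCat.of A ((M ⧸ L) ⧸ S)) n :=
    have := ih _ (lt_comap_mkQ L hS)
    hasProjectiveDimensionLT_of_linearEquiv (quotientComapMkQEquiv L S)
  by_cases h : ∃ x ∈ maximalIdeal A, IsSMulRegular (M ⧸ L) x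
  · obtain ⟨x, hx, hreg⟩ := h
    have := quotient (x • ⊤) fun h => by
      obtain ⟨y, hy⟩ := exists_ne (0 : M ⧸ L)
      exact hy (hreg.right_eq_zero_of_smul
        ((Submodule.mem_bot A).1 (h ▸ Submodule.smul_mem_pointwise_smul y x ⊤ trivial)))
    exact hasProjectiveDimensionLT_of_quotSMulTop hx hreg
  · push Not at h
    obtain ⟨f, hf⟩ := exists_injective_residue_of_forall_not_isSMulRegular h
    have := quotient (LinearMap.range f) fun h => by
      have : Nontrivial (A ⧸ maximalIdeal A) :=
        Ideal.Quotient.nontrivial_iff.2 (maximalIdeal.isMaximal A).ne_top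
      exact one_ne_zero (hf (by simp [LinearMap.range_eq_bot.1 h] : f 1 = f 0))
    exact hasProjectiveDimensionLT_of_injective_of_quotient_range f hf

lemma length_le_ringKrullDim_of_isWeaklyRegular {rs : List A}
    (hrs : ∀ x ∈ rs, x ∈ maximalIdeal A) (hreg : IsWeaklyRegular A rs) :
    (rs.length : WithBot ℕ∞) ≤ ringKrullDim A := by
  have hreg := IsRegular.of_isWeaklyRegular_of_mem_maximalIdeal A hrs hreg
  rw [← ringKrullDim_add_length_eq_ringKrullDim_of_isRegular rs hreg]
  have : Nontrivial (A ⧸ Ideal.ofList rs) := Ideal.Quotient.nontrivial_iff.2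
    (ne_top_of_le_ne_top (maximalIdeal.isMaximal A).ne_top (Ideal.span_le.2 hrs))
  exact le_add_of_nonneg_left ringKrullDim_nonneg_of_nontrivial

variable (A) in
lemma exists_isWeaklyRegular_forall_not_isSMulRegular :
    ∃ rs : List A, (∀ x ∈ rs, x ∈ maximalIdeal A) ∧ IsWeaklyRegular A rs ∧
      ∀ x ∈ maximalIdeal A, ¬ IsSMulRegular (A ⧸ Ideal.ofList rs • (⊤ : Submodule A A)) x := by
  by_contra! extend
  have exists_length_eq (n : ℕ) : ∃ rs : List A, rs.length = n ∧
      (∀ x ∈ rs, x ∈ maximalIdeal A) ∧ IsWeaklyRegular A rs := by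
    induction n with
    | zero => exact ⟨[], rfl, by simp, .nil A A⟩
    | succ n ih =>
      obtain ⟨rs, hlen, hrs, hreg⟩ := ih
      obtain ⟨x, hx, hxreg⟩ := extend rs hrs hreg
      refine ⟨rs ++ [x], by simp [hlen], ?_, (isWeaklyRegular_append_iff A rs [x]).2
        ⟨hreg, (isWeaklyRegular_singleton_iff _ x).2 hxreg⟩⟩
      simpa only [List.mem_append, List.mem_singleton, or_imp, forall_and, forall_eq] using
        ⟨hrs, hx⟩
  refine ringKrullDim_ne_top (R := A) (ENat.WithBot.eq_top_iff_forall_ge.2 fun n => ?_)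
  obtain ⟨rs, rfl, hrs, hreg⟩ := exists_length_eq n
  exact length_le_ringKrullDim_of_isWeaklyRegular hrs hreg

lemma projectiveDimension_quotient_ofList {M : Type u} [AddCommGroup M] [Module A M]
    [Nontrivial M] [Module.Finite A M] {rs : List A} (hrs : ∀ x ∈ rs, x ∈ maximalIdeal A)
    (hreg : IsWeaklyRegular M rs) :
    projectiveDimension (ModuleCat.of A (M ⧸ Ideal.ofList rs • (⊤ : Submodule A M))) =
      projectiveDimension (ModuleCat.of A M) + rs.length :=
  ModuleCat.projectiveDimension_quotient_eq_add_length_of_isWeaklyRegular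
    (ModuleCat.of A M) rs hreg hrs

lemma hasProjectiveDimensionLT_quotient_ofList {rs : List A}
    (hrs : ∀ x ∈ rs, x ∈ maximalIdeal A) (hreg : IsWeaklyRegular A rs) :
    HasProjectiveDimensionLT
      (ModuleCat.of A (A ⧸ Ideal.ofList rs • (⊤ : Submodule A A))) (rs.length + 1) := by
  refine (projectiveDimension_le_iff _ _).1 (le_of_eq ?_)
  rw [projectiveDimension_quotient_ofList hrs hreg,
    ModuleCat.projectiveDimension_eq_zero_of_projective, zero_add]

lemma hasProjectiveDimensionLT_residue {n : ℕ} {rs : List A}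
    (hrs : ∀ x ∈ rs, x ∈ maximalIdeal A) (hreg : IsWeaklyRegular A rs)
    (hmax : ∀ x ∈ maximalIdeal A, ¬ IsSMulRegular (A ⧸ Ideal.ofList rs • (⊤ : Submodule A A)) x)
    (hn : HasProjectiveDimensionLT (ModuleCat.of A (A ⧸ maximalIdeal A)) n) :
    HasProjectiveDimensionLT (ModuleCat.of A (A ⧸ maximalIdeal A)) (rs.length + 1) := by
  obtain ⟨f, hf⟩ := exists_injective_residue_of_forall_not_isSMulRegular hmax
  rcases le_total n (rs.length + 1) with hle | hle
  · exact hasProjectiveDimensionLT_of_ge _ n _ hle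
  induction n, hle using Nat.le_induction with
  | base => exact hn
  | succ n hle ih =>
    have := hasProjectiveDimensionLT_quotient_ofList hrs hreg
    have := hasProjectiveDimensionLT_of_ge
      (ModuleCat.of A (A ⧸ Ideal.ofList rs • (⊤ : Submodule A A))) _ n hle
    have := hasProjectiveDimensionLT_of_residue (A := A) (n := n + 1)
      ((A ⧸ Ideal.ofList rs • (⊤ : Submodule A A)) ⧸ LinearMap.range f)
    exact ih (hasProjectiveDimensionLT_of_injective f hf)

lemma projectiveDimension_le_ringKrullDim {n : ℕ}
    [HasProjectiveDimensionLT (ModuleCat.of A (A ⧸ maximalIdeal A)) n]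
    (M : Type u) [AddCommGroup M] [Module A M] [Module.Finite A M] :
    projectiveDimension (ModuleCat.of A M) ≤ ringKrullDim A := by
  obtain ⟨rs, hrs, hreg, hmax⟩ := exists_isWeaklyRegular_forall_not_isSMulRegular A
  have := hasProjectiveDimensionLT_residue hrs hreg hmax ‹_›
  exact ((projectiveDimension_le_iff _ _).2 (hasProjectiveDimensionLT_of_residue M)).trans
    (length_le_ringKrullDim_of_isWeaklyRegular hrs hreg)

lemma projective_of_isWeaklyRegular_of_length_eq_ringKrullDim {n : ℕ}
    [HasProjectiveDimensionLT (ModuleCat.of A (A ⧸ maximalIdeal A)) n]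
    {M : Type u} [AddCommGroup M] [Module A M] [Module.Finite A M] {rs : List A}
    (hrs : ∀ x ∈ rs, x ∈ maximalIdeal A) (hreg : IsWeaklyRegular M rs)
    (hlen : rs.length = ringKrullDim A) : Module.Projective A M := by
  rcases subsingleton_or_nontrivial M with _ | _
  · infer_instance
  have pd_add_le : projectiveDimension (ModuleCat.of A M) + rs.length ≤ (0 : ℕ) + rs.length := by
    rw [← projectiveDimension_quotient_ofList hrs hreg, hlen, Nat.cast_zero, zero_add]
    exact projectiveDimension_le_ringKrullDim (n := n) _
  rw [ENat.WithBot.add_le_add_natCast_right_iff, projectiveDimension_le_iff] at pd_add_le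
  rw [IsProjective.iff_projective]
  exact (projective_iff_hasProjectiveDimensionLE_zero _).2 pd_add_le

end LocalRing

section GlobalDimension

open CategoryTheory

lemma hasFiniteGlobalDimension_iff {S : Type u} [Ring S] :
    HasFiniteGlobalDimension S ↔ ∃ n : ℕ, ∀ (M : Type u) [AddCommGroup M] [Module S M],
      HasProjectiveDimensionLT (ModuleCat.of S M) n := by
  let : HasDerivedCategory (ModuleCat S) := HasDerivedCategory.standard _
  let : HasExt (ModuleCat S) := hasExt_of_hasDerivedCategory _
  constructor
  · rintro ⟨n, subsingleton⟩
    refine ⟨n + 1, fun M _ _ => (hasProjectiveDimensionLT_iff _ _).2 fun i hi Y e => ?_⟩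
    exact (subsingleton M Y i hi).elim _ _
  · rintro ⟨n, hn⟩
    refine ⟨n, fun M N _ _ _ _ i hi => ?_⟩
    have := hn M
    exact HasProjectiveDimensionLT.subsingleton (ModuleCat.of S M) n i hi.le _

end GlobalDimension

section HeightGrade

variable {C : Type*} [CommRing C]

lemma cHeight_eq_height (p : Ideal C) [hp : p.IsPrime] : cHeight p = p.height := by
  rw [show p.height = _ from PrimeSpectrum.height_eq_orderHeight (⟨p, hp⟩ : PrimeSpectrum C)]
  apply le_antisymm
  · refine sSup_le ?_
    rintro _ ⟨n, rfl, f, hf, prime, last⟩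
    let chain : LTSeries (PrimeSpectrum C) :=
      { length := n
        toFun := fun i => ⟨f i, prime i⟩
        step := fun i => hf i.castSucc_lt_succ }
    exact Order.length_le_height (p := chain) (PrimeSpectrum.ext last).le
  · refine Order.height_le fun chain last => le_sSup ⟨chain.length, rfl,
      fun i => (chain i).asIdeal, fun _ _ hij => chain.strictMono hij,
      fun i => (chain i).isPrime, congrArg PrimeSpectrum.asIdeal last⟩

lemma exists_isWeaklyRegular_of_cGrade_eq {I : Ideal C} {M : Type*} [AddCommGroup M] [Module C M]
    {d : ℕ} (h : cGrade I M = d) :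
    ∃ rs : List C, rs.length = d ∧ (∀ x ∈ rs, x ∈ I) ∧
      RingTheory.Sequence.IsWeaklyRegular M rs := by
  rcases d with _ | d
  · exact ⟨[], rfl, by simp, .nil C M⟩
  have lt_cGrade : (d : ℕ∞) < cGrade I M := by
    rw [h]
    exact_mod_cast d.lt_succ_self
  obtain ⟨_, ⟨rs, rfl, hrs, hreg⟩, lt⟩ := lt_sSup_iff.1 lt_cGrade
  have le : (rs.length : ℕ∞) ≤ (d + 1 : ℕ) := h ▸ le_sSup ⟨rs, rfl, hrs, hreg⟩
  exact ⟨rs, le_antisymm (by exact_mod_cast le) (by exact_mod_cast lt), hrs,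
    hreg.toIsWeaklyRegular⟩

end HeightGrade

section BaseChange

open CategoryTheory TensorProduct

variable {Z R A : Type u} [CommRing Z] [Ring R] [Algebra Z R] [CommRing A] [Algebra Z A]

lemma projective_baseChange_of_algebra [Module.Projective A (A ⊗[Z] R)] (X : Type*)
    [AddCommGroup X] [Module R X] [Module Z X] [IsScalarTower Z R X] [Module.Projective R X] :
    Module.Projective A (A ⊗[Z] X) := by
  classical
  obtain ⟨s, hs⟩ := Module.projective_def'.1 (inferInstance : Module.Projective R X)
  have : Module.Projective A (X →₀ A ⊗[Z] R) :=
    Module.Projective.of_equiv (finsuppLEquivDirectSum A (A ⊗[Z] R) X).symm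
  have : Module.Projective A (A ⊗[Z] (X →₀ R)) :=
    Module.Projective.of_equiv (TensorProduct.finsuppRight Z A A R X).symm
  refine Module.Projective.of_split (LinearMap.baseChange A (s.restrictScalars Z))
    (LinearMap.baseChange A ((Finsupp.linearCombination R id).restrictScalars Z)) ?_
  rw [← LinearMap.baseChange_comp, ← LinearMap.restrictScalars_comp, hs]
  exact LinearMap.baseChange_id

/-- Flat base change commutes with kernels of surjections. -/
noncomputable def baseChangeKerEquiv [Module.Flat Z A] {P X : Type*} [AddCommGroup P]
    [AddCommGroup X] [Module Z P] [Module Z X] (g : P →ₗ[Z] X) (hg : Function.Surjective g) :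
    A ⊗[Z] LinearMap.ker g ≃ₗ[A] LinearMap.ker (g.baseChange A) :=
  have exact : Function.Exact ((LinearMap.ker g).subtype.baseChange A) (g.baseChange A) :=
    lTensor_exact A (LinearMap.exact_subtype_ker_map g) hg
  LinearEquiv.ofInjective ((LinearMap.ker g).subtype.baseChange A)
      (Module.Flat.lTensor_preserves_injective_linearMap _ Subtype.val_injective) ≪≫ₗ
    LinearEquiv.ofEq _ _ (LinearMap.exact_iff.1 exact).symm

lemma hasProjectiveDimensionLT_succ_iff_ker {S P X : Type u} [Ring S] [AddCommGroup P]
    [AddCommGroup X] [Module S P] [Module S X] [Module.Projective S P] {g : P →ₗ[S] X}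
    (hg : Function.Surjective g) {n : ℕ} :
    HasProjectiveDimensionLT (ModuleCat.of S X) (n + 2) ↔
      HasProjectiveDimensionLT (ModuleCat.of S (LinearMap.ker g)) (n + 1) :=
  (LinearMap.shortExact_shortComplexKer hg).hasProjectiveDimensionLT_X₃_iff n
    ((IsProjective.iff_projective P).1 inferInstance)

lemma hasProjectiveDimensionLT_one_iff_projective {S X : Type u} [Ring S] [AddCommGroup X]
    [Module S X] :
    HasProjectiveDimensionLT (ModuleCat.of S X) 1 ↔ Module.Projective S X :=
  projective_iff_hasProjectiveDimensionLT_one.symm.trans (IsProjective.iff_projective X).symm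

lemma hasProjectiveDimensionLT_baseChange [Module.Flat Z A] [Module.Projective A (A ⊗[Z] R)]
    {n : ℕ} (X : Type u) [AddCommGroup X] [Module R X] [Module Z X] [IsScalarTower Z R X]
    (h : HasProjectiveDimensionLT (ModuleCat.of R X) (n + 1)) :
    HasProjectiveDimensionLT (ModuleCat.of A (A ⊗[Z] X)) (n + 1) := by
  induction n generalizing X with
  | zero =>
    rw [zero_add, hasProjectiveDimensionLT_one_iff_projective] at h ⊢
    exact projective_baseChange_of_algebra (R := R) X
  | succ n ih =>
    let presentation : (X →₀ R) →ₗ[R] X := Finsupp.linearCombination R id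
    have surjective : Function.Surjective presentation :=
      Finsupp.linearCombination_id_surjective R X
    have := projective_baseChange_of_algebra (Z := Z) (A := A) (R := R) (X →₀ R)
    have : HasProjectiveDimensionLT
        (ModuleCat.of A (A ⊗[Z] LinearMap.ker (presentation.restrictScalars Z))) (n + 1) :=
      ih (LinearMap.ker presentation) ((hasProjectiveDimensionLT_succ_iff_ker surjective).1 h)
    refine (hasProjectiveDimensionLT_succ_iff_ker
      (g := (presentation.restrictScalars Z).baseChange A)
      (LinearMap.lTensor_surjective A surjective)).2 ?_
    exact hasProjectiveDimensionLT_of_linearEquiv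
      (baseChangeKerEquiv (presentation.restrictScalars Z) surjective)

lemma hasProjectiveDimensionLT_of_comp_eq_id {S M N : Type u} [Ring S] [AddCommGroup M]
    [Module S M] [AddCommGroup N] [Module S N] {i : M →ₗ[S] N} {r : N →ₗ[S] M}
    (h : r ∘ₗ i = LinearMap.id) {n : ℕ} [HasProjectiveDimensionLT (ModuleCat.of S N) n] :
    HasProjectiveDimensionLT (ModuleCat.of S M) n :=
  Retract.hasProjectiveDimensionLT (Y := ModuleCat.of S N)
    ⟨ModuleCat.ofHom i, ModuleCat.ofHom r, by rw [← ModuleCat.ofHom_comp, h]; rfl⟩ n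

lemma hasProjectiveDimensionLT_of_tensorProduct_free {B M : Type u} [AddCommGroup B] [Module A B]
    [Module.Free A B] [Nontrivial B] [AddCommGroup M] [Module A M] {n : ℕ}
    [HasProjectiveDimensionLT (ModuleCat.of A (M ⊗[A] B)) n] :
    HasProjectiveDimensionLT (ModuleCat.of A M) n := by
  let b := Module.Free.chooseBasis A B
  obtain ⟨i⟩ := b.index_nonempty
  refine hasProjectiveDimensionLT_of_comp_eq_id (i := (TensorProduct.mk A M B).flip (b i))
    (r := TensorProduct.rid A M ∘ₗ (b.coord i).lTensor M) ?_
  ext m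
  simp

/-- For a localization `A` of `Z`, the `R`-module induced from an `A`-module `M` localizes to
`M ⊗ R_A`, where `R_A = A ⊗ R`. -/
noncomputable def localizationTensorInducedEquiv (S : Submonoid Z) [IsLocalization S A]
    (M : Type*) [AddCommGroup M] [Module A M] [Module Z M] [IsScalarTower Z A M] :
    A ⊗[Z] (R ⊗[Z] M) ≃ₗ[A] M ⊗[A] (A ⊗[Z] R) :=
  LinearEquiv.baseChange Z A _ _ (TensorProduct.comm Z R M) ≪≫ₗ
    IsLocalization.moduleLid S A (M ⊗[Z] R) ≪≫ₗ
      (TensorProduct.AlgebraTensorModule.cancelBaseChange Z A A M R).symm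

lemma hasFiniteGlobalDimension_of_free_localization (S : Submonoid Z) [IsLocalization S A]
    [Module.Free A (A ⊗[Z] R)] [Nontrivial (A ⊗[Z] R)] (h : HasFiniteGlobalDimension R) :
    HasFiniteGlobalDimension A := by
  have : Module.Flat Z A := IsLocalization.flat A S
  obtain ⟨n, hn⟩ := hasFiniteGlobalDimension_iff.1 h
  refine hasFiniteGlobalDimension_iff.2 ⟨n + 1, fun M _ _ => ?_⟩
  let : Module Z M := Module.compHom M (algebraMap Z A)
  have : IsScalarTower Z A M := .of_algebraMap_smul fun _ _ => rfl
  have := hn (R ⊗[Z] M)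
  have : HasProjectiveDimensionLT (ModuleCat.of A (A ⊗[Z] (R ⊗[Z] M))) (n + 1) :=
    hasProjectiveDimensionLT_baseChange (R := R) _ (hasProjectiveDimensionLT_of_ge _ n _ n.le_succ)
  have := hasProjectiveDimensionLT_of_linearEquiv (n := n + 1)
    (localizationTensorInducedEquiv (A := A) (R := R) S M)
  exact hasProjectiveDimensionLT_of_tensorProduct_free (B := A ⊗[Z] R)

end BaseChange

section CohenMacaulay

open TensorProduct

variable {Z M : Type u} [CommRing Z] [IsNoetherianRing Z] [AddCommGroup M] [Module Z M]
  [Module.Finite Z M]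

lemma projective_localization_of_isMaximalCohenMacaulay (m : Ideal Z) [m.IsMaximal]
    (hCM : IsMaximalCohenMacaulay Z M)
    (hgl : HasFiniteGlobalDimension (Localization.AtPrime m)) :
    Module.Projective (Localization.AtPrime m) (Localization.AtPrime m ⊗[Z] M) := by
  have : IsNoetherianRing (Localization.AtPrime m) :=
    IsLocalization.isNoetherianRing m.primeCompl _ inferInstance
  obtain ⟨n, hn⟩ := hasFiniteGlobalDimension_iff.1 hgl
  have := hn (Localization.AtPrime m ⧸ IsLocalRing.maximalIdeal (Localization.AtPrime m))
  obtain ⟨d, hd⟩ := ENat.ne_top_iff_exists.1 (Ideal.height_ne_top_of_isPrime (I := m))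
  obtain ⟨rs, hlen, hrs, hreg⟩ := exists_isWeaklyRegular_of_cGrade_eq (I := m) (M := M) (d := d)
    (by rw [hCM m inferInstance, cHeight_eq_height, ← hd])
  refine projective_of_isWeaklyRegular_of_length_eq_ringKrullDim (n := n) ?_
    (hreg.of_isLocalizedModule (Localization.AtPrime m) m.primeCompl
      (TensorProduct.mk Z (Localization.AtPrime m) M 1)) ?_
  · simpa only [List.forall_mem_map, IsLocalization.AtPrime.to_map_mem_maximal_iff _ m] using hrs
  · rw [List.length_map, hlen, IsLocalization.AtPrime.ringKrullDim_eq_height m, ← hd]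
    rfl

end CohenMacaulay

section SurjectiveUpTo

variable {A E F G : Type*} [CommRing A] [AddCommGroup E] [Module A E] [AddCommGroup F] [Module A F]
  [AddCommGroup G] [Module A G]

/-- A linear map is surjective up to `S` if every element of the target has an `S`-multiple in the
range; equivalently, the map becomes surjective once `S` is inverted. -/
def SurjectiveUpTo (S : Submonoid A) (f : E →ₗ[A] F) : Prop :=
  ∀ y, ∃ s ∈ S, ∃ x, f x = s • y

namespace SurjectiveUpTo

variable {S T : Submonoid A} {f : E →ₗ[A] F}

lemma of_surjective (hf : Function.Surjective f) : SurjectiveUpTo S f := fun y =>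
  ⟨1, S.one_mem, (hf y).imp fun _ hx => by rw [hx, one_smul]⟩

lemma mono (hST : S ≤ T) (hf : SurjectiveUpTo S f) : SurjectiveUpTo T f := fun y =>
  (hf y).imp fun _ => And.imp_left fun hs => hST hs

lemma linearEquiv_comp (e : F ≃ₗ[A] G) (hf : SurjectiveUpTo S f) :
    SurjectiveUpTo S (e.toLinearMap ∘ₗ f) := fun y => by
  obtain ⟨s, hs, x, hx⟩ := hf (e.symm y)
  exact ⟨s, hs, x, by simp [hx]⟩

lemma exists_comp_eq_smul_id [Module.Free A F] [Module.Finite A F] (hf : SurjectiveUpTo S f) :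
    ∃ s ∈ S, ∃ g : F →ₗ[A] E, f ∘ₗ g = s • LinearMap.id := by
  classical
  let b := Module.Free.chooseBasis A F
  choose s hs x hx using fun i => hf (b i)
  choose c hc using fun i => Finset.dvd_prod_of_mem s (Finset.mem_univ i)
  refine ⟨∏ i, s i, S.prod_mem fun i _ => hs i, b.constr A fun i => c i • x i, b.ext fun i => ?_⟩
  rw [LinearMap.comp_apply, b.constr_basis, map_smul, hx, smul_smul, mul_comm, ← hc,
    LinearMap.smul_apply, LinearMap.id_apply]

lemma det_notMem [Module.Free A F] [Module.Finite A F] {f : F →ₗ[A] F} {q : Ideal A} [q.IsPrime]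
    (hf : SurjectiveUpTo q.primeCompl f) : LinearMap.det f ∉ q := by
  obtain ⟨s, hs, g, hg⟩ := hf.exists_comp_eq_smul_id
  have det_mul_det : LinearMap.det f * LinearMap.det g = s ^ Module.finrank A F := by
    rw [← LinearMap.det_comp, hg, LinearMap.det_smul, LinearMap.det_id, mul_one]
  intro hdet
  exact hs (Ideal.IsPrime.mem_of_pow_mem ‹_› _ (det_mul_det ▸ q.mul_mem_right _ hdet))

end SurjectiveUpTo

variable [IsNoetherianRing A]

lemma isUnit_of_forall_notMem_of_height_le_one {a : A}
    (h : ∀ q : Ideal A, q.IsPrime → q.height ≤ 1 → a ∉ q) : IsUnit a := by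
  by_contra not_isUnit
  obtain ⟨q, hq⟩ := Ideal.nonempty_minimalPrimes (I := Ideal.span {a})
    (mt Ideal.span_singleton_eq_top.1 not_isUnit)
  exact h q hq.1.1 (Ideal.height_le_one_of_isPrincipal_of_mem_minimalPrimes _ q hq)
    (hq.1.2 (Ideal.mem_span_singleton_self a))

lemma bijective_of_forall_surjectiveUpTo_of_height_le_one [Nontrivial A] [Module.Free A E]
    [Module.Finite A E] [Module.Free A F] [Module.Finite A F]
    (hrank : Module.finrank A E = Module.finrank A F) {f : E →ₗ[A] F}
    (h : ∀ (q : Ideal A) [q.IsPrime], q.height ≤ 1 → SurjectiveUpTo q.primeCompl f) :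
    Function.Bijective f := by
  let e : F ≃ₗ[A] E := LinearEquiv.ofFinrankEq _ _ hrank.symm
  have isUnit_det : IsUnit (LinearMap.det (e.toLinearMap ∘ₗ f)) :=
    isUnit_of_forall_notMem_of_height_le_one fun q _ hq => ((h q hq).linearEquiv_comp e).det_notMem
  have bijective : Function.Bijective (e ∘ f) :=
    (Module.End.isUnit_iff _).1 ((LinearMap.isUnit_iff_isUnit_det _).2 isUnit_det)
  exact (e.bijective.of_comp_iff' f).1 bijective

end SurjectiveUpTo

section EnvelopingMap

open TensorProduct

section Localization

variable {Z R A : Type*} [CommRing Z] [Ring R] [Algebra Z R] [CommRing A] [Algebra Z A]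

lemma azuMap_tmul_apply (a : R) (b : Rᵐᵒᵖ) (x : R) :
    azuMap Z R (a ⊗ₜ b) x = a * (x * b.unop) := rfl

lemma exists_azuMap_eq_baseChange (t : R ⊗[Z] Rᵐᵒᵖ) :
    ∃ T, azuMap A (A ⊗[Z] R) T = (azuMap Z R t).baseChange A := by
  induction t with
  | zero => exact ⟨0, by simp⟩
  | tmul a b =>
    refine ⟨(1 ⊗ₜ a) ⊗ₜ MulOpposite.op (1 ⊗ₜ b.unop), ?_⟩
    ext x
    simp [azuMap_tmul_apply]
  | add t₁ t₂ h₁ h₂ =>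
    obtain ⟨T₁, hT₁⟩ := h₁
    obtain ⟨T₂, hT₂⟩ := h₂
    exact ⟨T₁ + T₂, by rw [map_add, map_add, hT₁, hT₂, LinearMap.baseChange_add]⟩

lemma exists_smul_azuMap_eq_baseChange (S : Submonoid Z) [IsLocalization S A]
    (T : (A ⊗[Z] R) ⊗[A] (A ⊗[Z] R)ᵐᵒᵖ) :
    ∃ s ∈ S, ∃ t, s • azuMap A (A ⊗[Z] R) T = (azuMap Z R t).baseChange A := by
  induction T with
  | zero => exact ⟨1, S.one_mem, 0, by simp⟩
  | tmul a b =>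
    have clear_denominator := IsLocalizedModule.surj S (TensorProduct.mk Z A R 1)
    obtain ⟨⟨a', s⟩, ha : (s : Z) • a = 1 ⊗ₜ a'⟩ := clear_denominator a
    obtain ⟨⟨b', s'⟩, hb : (s' : Z) • b.unop = 1 ⊗ₜ b'⟩ := clear_denominator b.unop
    refine ⟨s * s', S.mul_mem s.2 s'.2, a' ⊗ₜ MulOpposite.op b', ?_⟩
    ext x
    calc ((s * s' : Z) • (a * ((1 ⊗ₜ x) * b.unop)) : A ⊗[Z] R)
        = (s : Z) • a * ((1 ⊗ₜ x) * (s' : Z) • b.unop) := by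
          rw [mul_smul, smul_mul_assoc, mul_smul_comm, mul_smul_comm]
      _ = 1 ⊗ₜ (a' * (x * b')) := by
          simp only [ha, hb, Algebra.TensorProduct.tmul_mul_tmul, mul_one]
  | add T₁ T₂ h₁ h₂ =>
    obtain ⟨s₁, hs₁, t₁, h₁⟩ := h₁
    obtain ⟨s₂, hs₂, t₂, h₂⟩ := h₂
    refine ⟨s₁ * s₂, S.mul_mem hs₁ hs₂, s₂ • t₁ + s₁ • t₂, ?_⟩
    rw [map_add, map_add, map_smul, map_smul, LinearMap.baseChange_add, LinearMap.baseChange_smul,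
      LinearMap.baseChange_smul, ← h₁, ← h₂, smul_add, mul_smul, mul_smul, smul_comm s₁ s₂]

lemma injective_mk_one_of_isTorsionFree [IsDomain Z] {M : Type*} [AddCommGroup M] [Module Z M]
    [Module.IsTorsionFree Z M] (S : Submonoid Z) [IsLocalization S A]
    (hS : S ≤ nonZeroDivisors Z) : Function.Injective (TensorProduct.mk Z A M 1) :=
  (IsLocalizedModule.injective_iff_isRegular S _).2 fun s =>
    .of_ne_zero (nonZeroDivisors.ne_zero (hS s.2))

lemma surjectiveUpTo_azuMap_of_surjective_localization [IsDomain Z] [Module.IsTorsionFree Z R]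
    (S : Submonoid Z) [IsLocalization S A] (hS : S ≤ nonZeroDivisors Z)
    (h : Function.Surjective (azuMap A (A ⊗[Z] R))) :
    SurjectiveUpTo S (azuMap Z R) := by
  intro φ
  obtain ⟨T, hT⟩ := h (φ.baseChange A)
  obtain ⟨s, hs, t, ht⟩ := exists_smul_azuMap_eq_baseChange S T
  refine ⟨s, hs, t, LinearMap.ext fun x => injective_mk_one_of_isTorsionFree (A := A) S hS ?_⟩
  rw [hT, ← LinearMap.baseChange_smul] at ht
  exact (LinearMap.congr_fun ht (1 ⊗ₜ x)).symm

lemma exists_baseChange_eq_smul {M : Type*} [AddCommGroup M] [Module Z M]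
    [Module.FinitePresentation Z M] (S : Submonoid Z) [IsLocalization S A]
    (ψ : A ⊗[Z] M →ₗ[A] A ⊗[Z] M) :
    ∃ s ∈ S, ∃ φ : M →ₗ[Z] M, φ.baseChange A = s • ψ := by
  obtain ⟨φ, s, hφ⟩ := Module.FinitePresentation.exists_lift_of_isLocalizedModule S
    (TensorProduct.mk Z A M 1) (ψ.restrictScalars Z ∘ₗ TensorProduct.mk Z A M 1)
  refine ⟨s, s.2, φ, ?_⟩
  ext x
  exact LinearMap.congr_fun hφ x

lemma surjectiveUpTo_azuMap_localization [Module.FinitePresentation Z R]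
    (S : Submonoid Z) [IsLocalization S A] (q : Ideal A) [q.IsPrime]
    (h : SurjectiveUpTo (q.under Z).primeCompl (azuMap Z R)) :
    SurjectiveUpTo q.primeCompl (azuMap A (A ⊗[Z] R)) := by
  intro ψ
  obtain ⟨s, hs, φ, hφ⟩ := exists_baseChange_eq_smul S ψ
  obtain ⟨s', hs', t, ht⟩ := h φ
  obtain ⟨T, hT⟩ := exists_azuMap_eq_baseChange (A := A) t
  have map_s_notMem : algebraMap Z A s ∈ q.primeCompl := fun mem =>
    Ideal.IsPrime.ne_top ‹_› (q.eq_top_of_isUnit_mem mem (IsLocalization.map_units A ⟨s, hs⟩))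
  refine ⟨algebraMap Z A s' * algebraMap Z A s, q.primeCompl.mul_mem hs' map_s_notMem, T, ?_⟩
  rw [hT, ht, LinearMap.baseChange_smul, hφ, mul_smul, algebraMap_smul, algebraMap_smul]

end Localization

lemma bijective_azuMap_of_forall_surjectiveUpTo_of_height_le_one {A B : Type*} [CommRing A]
    [Nontrivial A] [IsNoetherianRing A] [Ring B] [Algebra A B] [Module.Free A B]
    [Module.Finite A B]
    (h : ∀ (q : Ideal A) [q.IsPrime], q.height ≤ 1 → SurjectiveUpTo q.primeCompl (azuMap A B)) :
    Function.Bijective (azuMap A B) := by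
  let op : B ≃ₗ[A] Bᵐᵒᵖ := MulOpposite.opLinearEquiv A
  have : Module.Free A Bᵐᵒᵖ := .of_equiv op
  have : Module.Finite A Bᵐᵒᵖ := .equiv op
  refine bijective_of_forall_surjectiveUpTo_of_height_le_one ?_ h
  rw [Module.finrank_linearMap, Module.finrank_tensorProduct, op.finrank_eq]

end EnvelopingMap

section PrimeRing

/-- Primeness of a possibly noncommutative ring: `a R b = 0` forces `a = 0` or `b = 0`. The zero
ring is allowed. -/
def IsPrimeRing (R : Type*) [Ring R] : Prop :=
  ∀ a b : R, (∀ r : R, a * r * b = 0) → a = 0 ∨ b = 0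

namespace IsPrimeRing

variable {R : Type*} [Ring R]

lemma eq_bot_or_eq_bot_of_mul_eq_bot (hR : IsPrimeRing R) {I J : Ideal R} [I.IsTwoSided]
    (h : I * J = ⊥) : I = ⊥ ∨ J = ⊥ := by
  by_contra! ne_bot
  obtain ⟨a, haI, ha⟩ := Submodule.exists_mem_ne_zero_of_ne_bot ne_bot.1
  obtain ⟨b, hbJ, hb⟩ := Submodule.exists_mem_ne_zero_of_ne_bot ne_bot.2
  refine (hR a b fun r => ?_).elim ha hb
  have mem_mul : a * r * b ∈ I * J := Ideal.mul_mem_mul (I.mul_mem_right r haI) hbJ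
  rwa [h] at mem_mul

lemma eq_bot_of_isNilpotent (hR : IsPrimeRing R) {I : Ideal R} [I.IsTwoSided]
    (h : IsNilpotent I) : I = ⊥ := by
  obtain ⟨n, hn⟩ := h
  induction n with
  | zero =>
    rw [Submodule.pow_zero, Ideal.one_eq_top] at hn
    exact eq_bot_iff.2 (le_top.trans hn.le)
  | succ n ih =>
    rw [Ideal.IsTwoSided.pow_succ] at hn
    exact (hR.eq_bot_or_eq_bot_of_mul_eq_bot hn).elim id ih

lemma isSemisimpleRing [IsArtinianRing R] (hR : IsPrimeRing R) : IsSemisimpleRing R := by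
  rw [IsArtinianRing.isSemisimpleRing_iff_jacobson]
  apply hR.eq_bot_of_isNilpotent
  rw [← Ideal.jacobson_bot]
  exact IsArtinianRing.isNilpotent_jacobson_bot

lemma isSimpleRing [Nontrivial R] [IsArtinianRing R] (hR : IsPrimeRing R) : IsSimpleRing R := by
  have := hR.isSemisimpleRing
  refine isSimpleRing_iff_isTwoSided_imp.2 ⟨inferInstance, fun I _ => or_iff_not_imp_left.2 ?_⟩
  intro hI
  rw [eq_top_iff, ← IsSemisimpleModule.sSup_simples_eq_top R R]
  refine sSup_le fun L hL => ?_
  have isAtom : IsAtom L := isSimpleModule_iff_isAtom.1 hL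
  have mul_ne_bot : I * L ≠ ⊥ := fun h =>
    (hR.eq_bot_or_eq_bot_of_mul_eq_bot h).elim hI isAtom.1
  calc L = I * L := ((isAtom.le_iff.1 Ideal.mul_le_right).resolve_left mul_ne_bot).symm
    _ ≤ I := Ideal.mul_le_left

lemma center_smul_eq_zero (hR : IsPrimeRing R) {z : Subring.center R} {x : R} (h : z • x = 0) :
    z = 0 ∨ x = 0 := by
  have mul_eq_zero : (z : R) * x = 0 := h
  refine (hR z x fun r => ?_).imp_left Subtype.ext
  rw [← Subring.mem_center_iff.1 z.2 r, mul_assoc, mul_eq_zero, mul_zero]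

lemma isDomain_center [Nontrivial R] (hR : IsPrimeRing R) : IsDomain (Subring.center R) :=
  have : NoZeroDivisors (Subring.center R) := ⟨fun {_ _} h =>
    (hR.center_smul_eq_zero (congrArg Subtype.val h)).imp_right Subtype.ext⟩
  NoZeroDivisors.to_isDomain _

lemma isTorsionFree_center [IsDomain (Subring.center R)] (hR : IsPrimeRing R) :
    Module.IsTorsionFree (Subring.center R) R :=
  .of_smul_eq_zero fun _ _ => hR.center_smul_eq_zero

end IsPrimeRing

end PrimeRing

section CentralSimple

open TensorProduct

variable {Z R : Type*} [CommRing Z] [Ring R] [Algebra Z R]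

attribute [local instance] TensorProduct.Algebra.module

lemma isCentral_center (R : Type*) [Ring R] : Algebra.IsCentral (Subring.center R) R :=
  ⟨fun x hx => ⟨⟨x, hx⟩, rfl⟩⟩

lemma envelope_smul_eq_azuMap (t : R ⊗[Z] Rᵐᵒᵖ) (x : R) : t • x = azuMap Z R t x := by
  induction t with
  | zero => exact (zero_smul (R ⊗[Z] Rᵐᵒᵖ) x).trans (by rw [map_zero, LinearMap.zero_apply])
  | tmul a b => rfl
  | add t₁ t₂ h₁ h₂ => rw [add_smul, h₁, h₂, map_add, LinearMap.add_apply]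

lemma tmul_one_smul (a x : R) : (a ⊗ₜ[Z] (1 : Rᵐᵒᵖ)) • x = a * x := by
  rw [envelope_smul_eq_azuMap, azuMap_tmul_apply, MulOpposite.unop_one, mul_one]

lemma one_tmul_op_smul (b x : R) : ((1 : R) ⊗ₜ[Z] MulOpposite.op b) • x = x * b := by
  rw [envelope_smul_eq_azuMap, azuMap_tmul_apply, MulOpposite.unop_op, one_mul]

variable (Z R) in
lemma isSimpleModule_envelope [IsSimpleRing R] : IsSimpleModule (R ⊗[Z] Rᵐᵒᵖ) R := by
  refine (isSimpleModule_iff _ _).2 ⟨fun N => ?_⟩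
  let I : Ideal R :=
    { N.toAddSubmonoid with
      smul_mem' := fun a x hx =>
        show a * x ∈ N from tmul_one_smul (Z := Z) a x ▸ N.smul_mem _ hx }
  have isTwoSided : I.IsTwoSided :=
    ⟨fun {x} b hx => show x * b ∈ N from one_tmul_op_smul (Z := Z) b x ▸ N.smul_mem _ hx⟩
  refine ((isSimpleRing_iff_isTwoSided_imp.1 ‹_›).2 I isTwoSided).imp (fun h => ?_) fun h => ?_
  · exact SetLike.coe_injective (congrArg (SetLike.coe (A := Ideal R)) h)
  · exact SetLike.coe_injective (congrArg (SetLike.coe (A := Ideal R)) h)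

lemma exists_forall_envelope_end_apply_eq_smul [Algebra.IsCentral Z R]
    (g : Module.End (R ⊗[Z] Rᵐᵒᵖ) R) : ∃ z : Z, ∀ x, g x = z • x := by
  have apply_eq_mul (x : R) : g x = x * g 1 := by
    rw [← tmul_one_smul (Z := Z), ← map_smul, tmul_one_smul, mul_one]
  have apply_eq_mul' (x : R) : g x = g 1 * x := by
    rw [← one_tmul_op_smul (Z := Z), ← map_smul, one_tmul_op_smul, one_mul]
  have mem_center : g 1 ∈ Subalgebra.center Z R :=
    Subalgebra.mem_center_iff.2 fun x => by rw [← apply_eq_mul, ← apply_eq_mul']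
  obtain ⟨z, hz⟩ := (Algebra.IsCentral.mem_center_iff Z).1 mem_center
  exact ⟨z, fun x => by rw [apply_eq_mul', hz, Algebra.smul_def]⟩

lemma surjective_azuMap_of_isSimpleRing [IsSimpleRing R] [Algebra.IsCentral Z R]
    [Module.Finite Z R] : Function.Surjective (azuMap Z R) := by
  intro φ
  have := isSimpleModule_envelope Z R
  let φ' : Module.End (Module.End (R ⊗[Z] Rᵐᵒᵖ) R) R :=
    { φ with
      map_smul' := fun g x => by
        obtain ⟨z, hz⟩ := exists_forall_envelope_end_apply_eq_smul g
        exact (congrArg φ (hz x)).trans ((φ.map_smul z x).trans (hz (φ x)).symm) }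
  obtain ⟨s, hs⟩ := (Module.Finite.fg_top : (⊤ : Submodule Z R).FG)
  obtain ⟨t, ht⟩ := jacobson_density φ' s
  exact ⟨t, LinearMap.ext_on hs fun x hx => (envelope_smul_eq_azuMap t x ▸ ht x hx).symm⟩

end CentralSimple

section AzumayaLocus

open TensorProduct

lemma exists_height_eq_one_of_not_isField {Z : Type*} [CommRing Z] [IsDomain Z]
    [IsNoetherianRing Z] (h : ¬ IsField Z) : ∃ p : Ideal Z, p.IsPrime ∧ p.height = 1 := by
  obtain ⟨a, ha, not_isUnit⟩ := Ring.exists_not_isUnit_of_not_isField h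
  obtain ⟨p, hp⟩ := Ideal.nonempty_minimalPrimes (I := Ideal.span {a})
    (mt Ideal.span_singleton_eq_top.1 not_isUnit)
  have := hp.1.1
  refine ⟨p, this, le_antisymm
    (Ideal.height_le_one_of_isPrincipal_of_mem_minimalPrimes _ p hp) ?_⟩
  rw [Order.one_le_iff_ne_zero, Ne, Ideal.height_eq_zero_iff_eq_bot]
  rintro rfl
  exact ha (hp.1.2 (Ideal.mem_span_singleton_self a))

lemma surjectiveUpTo_azuMap_of_height_le_one {Z R : Type*} [CommRing Z] [IsDomain Z]
    [IsNoetherianRing Z] [Ring R] [Nontrivial R] [Algebra Z R] [Module.Finite Z R]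
    [Module.IsTorsionFree Z R] [Algebra.IsCentral Z R] (hR : IsPrimeRing R)
    (hAz : ∀ (p : Ideal Z) [p.IsPrime], p.height = 1 →
      IsAzumayaAlg (Localization.AtPrime p) (Localization.AtPrime p ⊗[Z] R))
    (p : Ideal Z) [p.IsPrime] (hp : p.height ≤ 1) : SurjectiveUpTo p.primeCompl (azuMap Z R) := by
  have of_height_eq_one (q : Ideal Z) [q.IsPrime] (hq : q.height = 1) :
      SurjectiveUpTo q.primeCompl (azuMap Z R) :=
    surjectiveUpTo_azuMap_of_surjective_localization (A := Localization.AtPrime q) q.primeCompl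
      q.primeCompl_le_nonZeroDivisors (hAz q hq).2.2.2.2
  rcases hp.eq_or_lt with height_eq_one | height_lt_one
  · exact of_height_eq_one p height_eq_one
  obtain rfl : p = ⊥ := by rwa [← Ideal.height_eq_zero_iff_eq_bot, ← Order.lt_one_iff]
  by_cases isField : IsField Z
  · let := isField.toField
    have := IsArtinianRing.of_finite Z R
    have := hR.isSimpleRing
    exact .of_surjective surjective_azuMap_of_isSimpleRing
  · obtain ⟨q, _, hq⟩ := exists_height_eq_one_of_not_isField isField
    have primeCompl_le : q.primeCompl ≤ (⊥ : Ideal Z).primeCompl := fun _ notMem mem =>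
      notMem ((bot_le : ⊥ ≤ q) mem)
    exact (of_height_eq_one q hq).mono primeCompl_le

variable {Z R : Type u} [CommRing Z] [Ring R] [Algebra Z R]

lemma isAzumayaAlg_localization_of_hasFiniteGlobalDimension [IsDomain Z] [IsNoetherianRing Z]
    [Nontrivial R] [Module.Finite Z R] [Module.IsTorsionFree Z R] [Algebra.IsCentral Z R]
    (hR : IsPrimeRing R) (hCM : IsMaximalCohenMacaulay Z R)
    (hAz : ∀ (p : Ideal Z) [p.IsPrime], p.height = 1 →
      IsAzumayaAlg (Localization.AtPrime p) (Localization.AtPrime p ⊗[Z] R))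
    (m : Ideal Z) [m.IsMaximal] (hgl : HasFiniteGlobalDimension (Localization.AtPrime m)) :
    IsAzumayaAlg (Localization.AtPrime m) (Localization.AtPrime m ⊗[Z] R) := by
  let A := Localization.AtPrime m
  have : IsNoetherianRing A := IsLocalization.isNoetherianRing m.primeCompl _ inferInstance
  have projective : Module.Projective A (A ⊗[Z] R) :=
    projective_localization_of_isMaximalCohenMacaulay m hCM hgl
  have : Module.Free A (A ⊗[Z] R) := Module.free_of_flat_of_isLocalRing
  have : Module.FinitePresentation Z R := Module.finitePresentation_of_finite Z R
  have : Nontrivial (A ⊗[Z] R) :=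
    (injective_mk_one_of_isTorsionFree m.primeCompl m.primeCompl_le_nonZeroDivisors).nontrivial
  refine ⟨inferInstance, projective, inferInstance,
    bijective_azuMap_of_forall_surjectiveUpTo_of_height_le_one fun q _ hq => ?_⟩
  refine surjectiveUpTo_azuMap_localization m.primeCompl q
    (surjectiveUpTo_azuMap_of_height_le_one hR hAz _ ?_)
  rwa [IsLocalization.height_under m.primeCompl q]

lemma hasFiniteGlobalDimension_localization_of_isAzumayaAlg (m : Ideal Z) [m.IsPrime]
    (hgl : HasFiniteGlobalDimension R)
    (hAz : IsAzumayaAlg (Localization.AtPrime m) (Localization.AtPrime m ⊗[Z] R)) :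
    HasFiniteGlobalDimension (Localization.AtPrime m) := by
  obtain ⟨finite, projective, faithful, -⟩ := hAz
  let A := Localization.AtPrime m
  have : Module.Free A (A ⊗[Z] R) := Module.free_of_flat_of_isLocalRing
  have : Nontrivial (A ⊗[Z] R) := (FaithfulSMul.algebraMap_injective A _).nontrivial
  exact hasFiniteGlobalDimension_of_free_localization m.primeCompl hgl

end AzumayaLocus

open TensorProduct in
/-- Let `R` be a prime noetherian ring, finitely generated as a module over its centre
`Z(R)`, with finite global dimension, which is `Z(R)`-Macaulay and Azumaya in height
one (i.e. `R_p` is Azumaya over `Z(R)_p` for every height-one prime `p` of `Z(R)`).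
Then the Azumaya locus of `R` equals the smooth locus of `Z(R)`: for a maximal ideal
`m` of `Z(R)`, `R_m` is Azumaya over `Z(R)_m` iff `Z(R)_m` has finite global
dimension. -/
theorem azumaya_locus_eq_smooth_locus (R : Type u) [Ring R] [IsNoetherianRing R]
    [Module.Finite (Subring.center R) R]
    (hprime : ∀ a b : R, (∀ r : R, a * r * b = 0) → a = 0 ∨ b = 0)
    (hgl : HasFiniteGlobalDimension R)
    (hCM : IsMaximalCohenMacaulay (Subring.center R) R)
    (hAz1 : ∀ (p : Ideal (Subring.center R)) (hp : p.IsPrime), cHeight p = 1 →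
      IsAzumayaAlg (Localization.AtPrime p)
        (Localization.AtPrime p ⊗[Subring.center R] R)) :
    ∀ (m : Ideal (Subring.center R)) (hm : m.IsMaximal),
      haveI : m.IsPrime := hm.isPrime
      (IsAzumayaAlg (Localization.AtPrime m)
          (Localization.AtPrime m ⊗[Subring.center R] R) ↔
        HasFiniteGlobalDimension (Localization.AtPrime m)) := by
  intro m hm
  have hR : IsPrimeRing R := hprime
  have : Nontrivial (Subring.center R) :=
    (Submodule.nontrivial_iff _).1 (nontrivial_of_ne m ⊤ hm.ne_top)
  have : Nontrivial R := Subtype.val_injective (p := (· ∈ Subring.center R)).nontrivial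
  have := hR.isDomain_center
  have := hR.isTorsionFree_center
  have := isCentral_center R
  have := isNoetherianRing_of_finite_of_faithfulSMul (Subring.center R) R
  exact ⟨hasFiniteGlobalDimension_localization_of_isAzumayaAlg m hgl,
    isAzumayaAlg_localization_of_hasFiniteGlobalDimension hR hCM
      (fun p hp height_eq_one => hAz1 p hp ((cHeight_eq_height p).trans height_eq_one)) m⟩
end
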